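/- arXiv:1710.09072 — 2 statements merged into one kernel-verified Lean document; each statement's English description precedes it below -/
import Mathlib

section
/- Let E be a complex Banach space and F: ℂ → E an entire E-valued function of exponential type σ with sup_{x∈ℝ}‖F(x)‖ < ∞. Then sup_{x∈ℝ}‖F'(x)‖ ≤ σ·sup_{x∈ℝ}‖F(x)‖. -/
/-!
By Phragmén–Lindelöf in the upper and lower half-planes, `‖F z‖ ≤ M * exp (σ * |z.im|)`; translating
and rescaling, one may assume `σ = 1` and bound the derivative at `0`. The zeros `a k` of the cosine
are simple, and `exp |z.im| / ‖cos z‖` is bounded on the circles `‖z‖ = N * π`, so summing the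
residues of `F z / (z ^ 2 * cos z)` gives Riesz's formula
`F' 0 = lim ∑ (-1) ^ k / a k ^ 2 • F (a k)`.
For `F = sin` this says that the absolute values of the weights add up to `1`, whence `‖F' 0‖ ≤ M`.
-/

open Complex Filter Metric Set Topology

section SimplePoles

variable {E : Type*} [NormedAddCommGroup E] [NormedSpace ℂ E]

theorem exists_differentiableAt_add_inv_smul_of_tendsto_sub_smul [CompleteSpace E]
    {f : ℂ → E} {a : ℂ} {r : E} (hf : ∀ᶠ z in 𝓝[≠] a, DifferentiableAt ℂ f z)
    (hr : Tendsto (fun z ↦ (z - a) • f z) (𝓝[≠] a) (𝓝 r)) :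
    ∃ g : ℂ → E, DifferentiableAt ℂ g a ∧ ∀ z ≠ a, f z = g z + (z - a)⁻¹ • r := by
  classical
  set φ : ℂ → E := Function.update (fun z ↦ (z - a) • f z) a r
  have φ_self : φ a = r := Function.update_self ..
  have φ_of_ne : ∀ z ≠ a, φ z = (z - a) • f z := fun z hz ↦ Function.update_of_ne hz ..
  have φ_continuousAt : ContinuousAt φ a := continuousAt_update_same.2 hr
  have φ_punctured : ∀ᶠ z in 𝓝[≠] a, DifferentiableAt ℂ φ z := by
    filter_upwards [hf, self_mem_nhdsWithin] with z hfz hz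
    refine ((differentiableAt_id.sub_const a).smul hfz).congr_of_eventuallyEq ?_
    filter_upwards [isOpen_ne.mem_nhds hz] with w hw using φ_of_ne w hw
  have φ_nhds : {z | DifferentiableAt ℂ φ z} ∈ 𝓝 a :=
    (analyticAt_of_differentiable_on_punctured_nhds_of_continuousAt φ_punctured
      φ_continuousAt).eventually_analyticAt.mono fun _ h ↦ h.differentiableAt
  have φ_differentiableOn : DifferentiableOn ℂ φ {z | DifferentiableAt ℂ φ z} :=
    fun _ hz ↦ DifferentiableAt.differentiableWithinAt hz
  refine ⟨dslope φ a,
    ((differentiableOn_dslope φ_nhds).2 φ_differentiableOn).differentiableAt φ_nhds,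
    fun z hz ↦ ?_⟩
  rw [dslope_of_ne _ hz, slope_def_module, φ_self, φ_of_ne z hz, ← smul_add, sub_add_cancel,
    inv_smul_smul₀ (sub_ne_zero.2 hz)]

theorem differentiableAt_sub_inv_smul_const {a z : ℂ} (hz : z ≠ a) (r : E) :
    DifferentiableAt ℂ (fun w ↦ (w - a)⁻¹ • r) z :=
  ((differentiableAt_id.sub_const a).inv (sub_ne_zero.2 hz)).smul_const r

theorem differentiableAt_of_eq_add_inv_smul {f g : ℂ → E} {a z : ℂ} {r : E}
    (hfg : ∀ w ≠ a, f w = g w + (w - a)⁻¹ • r) (hz : z ≠ a) (hf : DifferentiableAt ℂ f z) :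
    DifferentiableAt ℂ g z := by
  refine (hf.sub (differentiableAt_sub_inv_smul_const hz r)).congr_of_eventuallyEq ?_
  filter_upwards [isOpen_ne.mem_nhds hz] with w hw
  exact eq_sub_of_add_eq (hfg w hw).symm

theorem tendsto_sub_smul_of_eq_add_inv_smul {f g : ℂ → E} {a b : ℂ} {r s : E}
    (hfg : ∀ z ≠ a, f z = g z + (z - a)⁻¹ • r) (hba : b ≠ a)
    (hs : Tendsto (fun z ↦ (z - b) • f z) (𝓝[≠] b) (𝓝 s)) :
    Tendsto (fun z ↦ (z - b) • g z) (𝓝[≠] b) (𝓝 s) := by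
  have tendsto_pole : Tendsto (fun z ↦ (z - b) • (z - a)⁻¹ • r) (𝓝[≠] b) (𝓝 0) := by
    have : ContinuousAt (fun z ↦ (z - b) • (z - a)⁻¹ • r) b :=
      (continuousAt_id.sub_const b).smul (differentiableAt_sub_inv_smul_const hba r).continuousAt
    simpa only [sub_self, zero_smul] using this.tendsto.mono_left nhdsWithin_le_nhds
  rw [← sub_zero s]
  refine (hs.sub tendsto_pole).congr' ?_
  filter_upwards [nhdsWithin_le_nhds (isOpen_ne.mem_nhds hba)] with z hz
  rw [hfg z hz, smul_add, add_sub_cancel_right]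

theorem circleIntegral_add_inv_smul [CompleteSpace E] {g : ℂ → E} {a c : ℂ} {R : ℝ}
    (hg : CircleIntegrable g c R) (ha : a ∈ ball c R) (r : E) :
    (∮ z in C(c, R), (g z + (z - a)⁻¹ • r)) =
      (∮ z in C(c, R), g z) + (2 * Real.pi * I : ℂ) • r := by
  have pole_integrable : CircleIntegrable (fun z ↦ (z - a)⁻¹ • r) c R :=
    ContinuousOn.circleIntegrable (pos_of_mem_ball ha).le fun z hz ↦
      (differentiableAt_sub_inv_smul_const (sphere_disjoint_ball.ne_of_mem hz ha)
        r).continuousAt.continuousWithinAt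
  rw [circleIntegral.integral_add hg pole_integrable, circleIntegral.integral_smul_const,
    circleIntegral.integral_sub_inv_of_mem_ball ha]

theorem circleIntegral_eq_sum_of_simple_poles [CompleteSpace E]
    {f r : ℂ → E} {c : ℂ} {R : ℝ} {S : Finset ℂ} (hR : 0 ≤ R)
    (hS : ∀ a ∈ S, a ∈ ball c R) (hf : ∀ z ∈ closedBall c R, z ∉ S → DifferentiableAt ℂ f z)
    (hr : ∀ a ∈ S, Tendsto (fun z ↦ (z - a) • f z) (𝓝[≠] a) (𝓝 (r a))) :
    (∮ z in C(c, R), f z) = (2 * Real.pi * I : ℂ) • ∑ a ∈ S, r a := by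
  classical
  induction S using Finset.induction_on generalizing f with
  | empty =>
    rw [Finset.sum_empty, smul_zero]
    exact circleIntegral_eq_zero_of_differentiable_on_off_countable hR countable_empty
      (fun z hz ↦ (hf z hz (Finset.notMem_empty z)).continuousAt.continuousWithinAt)
      fun z hz ↦ hf z (ball_subset_closedBall hz.1) (Finset.notMem_empty z)
  | insert a S haS ih =>
    obtain ⟨ha, hS⟩ := Finset.forall_mem_insert _ _ _ |>.1 hS
    obtain ⟨hra, hr⟩ := Finset.forall_mem_insert _ _ _ |>.1 hr
    have hf_punctured : ∀ᶠ z in 𝓝[≠] a, DifferentiableAt ℂ f z := by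
      filter_upwards [self_mem_nhdsWithin, nhdsWithin_le_nhds (isOpen_ball.mem_nhds ha),
        nhdsWithin_le_nhds (S.finite_toSet.isClosed.isOpen_compl.mem_nhds haS)] with z hza hz hzS
      exact hf z (ball_subset_closedBall hz) (by simpa using ⟨hza, hzS⟩)
    obtain ⟨g, hga, hfg⟩ :=
      exists_differentiableAt_add_inv_smul_of_tendsto_sub_smul hf_punctured hra
    have hg : ∀ z ∈ closedBall c R, z ∉ S → DifferentiableAt ℂ g z := by
      intro z hz hzS
      obtain rfl | hza := eq_or_ne z a
      · exact hga
      · exact differentiableAt_of_eq_add_inv_smul hfg hza (hf z hz (by simp [hza, hzS]))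
    have hgr : ∀ b ∈ S, Tendsto (fun z ↦ (z - b) • g z) (𝓝[≠] b) (𝓝 (r b)) := fun b hb ↦
      tendsto_sub_smul_of_eq_add_inv_smul hfg (ne_of_mem_of_not_mem hb haS) (hr b hb)
    have sphere_ne : ∀ b ∈ ball c R, ∀ z ∈ sphere c R, z ≠ b :=
      fun b hb z hz ↦ sphere_disjoint_ball.ne_of_mem hz hb
    have g_integrable : CircleIntegrable g c R := ContinuousOn.circleIntegrable hR fun z hz ↦
      (hg z (sphere_subset_closedBall hz) fun hzS ↦
        sphere_ne z (hS z hzS) z hz rfl).continuousAt.continuousWithinAt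
    rw [circleIntegral.integral_congr hR fun z hz ↦ hfg z (sphere_ne a ha z hz),
      circleIntegral_add_inv_smul g_integrable ha, ih hS hg hgr, Finset.sum_insert haS, smul_add,
      add_comm]

theorem tendsto_sub_smul_inv_smul_of_hasDerivAt {D : ℂ → ℂ} {g : ℂ → E} {a d : ℂ}
    (hD : HasDerivAt D d a) (hDa : D a = 0) (hd : d ≠ 0) (hg : ContinuousAt g a) :
    Tendsto (fun z ↦ (z - a) • (D z)⁻¹ • g z) (𝓝[≠] a) (𝓝 (d⁻¹ • g a)) := by
  refine ((hD.tendsto_slope.inv₀ hd).smul (hg.tendsto.mono_left nhdsWithin_le_nhds)).congr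
    fun z ↦ ?_
  rw [slope_def_field, hDa, sub_zero, inv_div, div_eq_mul_inv, mul_smul]

theorem circleIntegral_inv_smul_eq_sum [CompleteSpace E] {D D' : ℂ → ℂ} {g : ℂ → E} {c : ℂ} {R : ℝ}
    {S : Finset ℂ} (hR : 0 ≤ R) (hS : ∀ a ∈ S, a ∈ ball c R)
    (hg : ∀ z ∈ closedBall c R, DifferentiableAt ℂ g z)
    (hD : ∀ z ∈ closedBall c R, HasDerivAt D (D' z) z)
    (hD_eq_zero : ∀ z ∈ closedBall c R, D z = 0 ↔ z ∈ S) (hD' : ∀ a ∈ S, D' a ≠ 0) :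
    (∮ z in C(c, R), (D z)⁻¹ • g z) = (2 * Real.pi * I : ℂ) • ∑ a ∈ S, (D' a)⁻¹ • g a := by
  refine circleIntegral_eq_sum_of_simple_poles hR hS (fun z hz hzS ↦ ?_) fun a ha ↦ ?_
  · exact ((hD z hz).differentiableAt.inv (mt (hD_eq_zero z hz).1 hzS)).smul (hg z hz)
  · have ha' : a ∈ closedBall c R := ball_subset_closedBall (hS a ha)
    exact tendsto_sub_smul_inv_smul_of_hasDerivAt (hD a ha') ((hD_eq_zero a ha').2 ha) (hD' a ha)
      (hg a ha').continuousAt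

end SimplePoles

section Cosine

theorem sq_norm_cos (z : ℂ) : ‖cos z‖ ^ 2 = Real.cosh z.im ^ 2 - Real.sin z.re ^ 2 := by
  have re_cos : (cos z).re = Real.cos z.re * Real.cosh z.im := by
    simp [cos_eq z, ← ofReal_cos, ← ofReal_cosh, ← ofReal_sin, ← ofReal_sinh]
  have im_cos : (cos z).im = -(Real.sin z.re * Real.sinh z.im) := by
    simp [cos_eq z, ← ofReal_cos, ← ofReal_cosh, ← ofReal_sin, ← ofReal_sinh]
  rw [Complex.sq_norm, normSq_apply, re_cos, im_cos]
  linear_combination Real.cosh z.im ^ 2 * Real.sin_sq_add_cos_sq z.re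
    - Real.sin z.re ^ 2 * Real.cosh_sq z.im

theorem norm_cos_le_exp_abs_im (z : ℂ) : ‖cos z‖ ≤ Real.exp |z.im| := by
  have norm_le_cosh : ‖cos z‖ ≤ Real.cosh z.im := by
    refine (sq_le_sq₀ (norm_nonneg _) (Real.cosh_pos _).le).1 ?_
    linarith [sq_norm_cos z, sq_nonneg (Real.sin z.re)]
  have := Real.sinh_nonneg_iff.2 (abs_nonneg z.im)
  have := Real.cosh_add_sinh |z.im|
  have := Real.cosh_abs z.im
  linarith

theorem norm_sin_le_exp_abs_im (z : ℂ) : ‖sin z‖ ≤ Real.exp |z.im| := by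
  have im_pi_div_two_sub : (Real.pi / 2 - z).im = -z.im := by
    rw [sub_im, ← ofReal_ofNat, ← ofReal_div, ofReal_im, zero_sub]
  rw [← cos_pi_div_two_sub, ← abs_neg, ← im_pi_div_two_sub]
  exact norm_cos_le_exp_abs_im _

theorem cosh_im_le_sqrt_two_mul_norm_cos {N : ℕ} {z : ℂ} (hz : ‖z‖ = N * Real.pi) :
    Real.cosh z.im ≤ √2 * ‖cos z‖ := by
  have sin_sq_le_im_sq : Real.sin z.re ^ 2 ≤ z.im ^ 2 := by
    have abs_re_le : |z.re| ≤ N * Real.pi := hz ▸ abs_re_le_norm z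
    have le_abs_add_abs : N * Real.pi ≤ |z.re| + |z.im| := hz ▸ norm_le_abs_re_add_abs_im z
    calc Real.sin z.re ^ 2 = Real.sin (N * Real.pi - |z.re|) ^ 2 := by
          rw [Real.sin_nat_mul_pi_sub, neg_sq, mul_pow, ← pow_mul', pow_mul, neg_one_sq, one_pow,
            one_mul]
          rcases abs_choice z.re with h | h <;> simp [h]
      _ ≤ (N * Real.pi - |z.re|) ^ 2 := Real.sin_sq_le_sq
      _ ≤ |z.im| ^ 2 := by gcongr; linarith
      _ = z.im ^ 2 := sq_abs _
  have im_sq_le_sinh_sq : z.im ^ 2 ≤ Real.sinh z.im ^ 2 := by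
    rw [sq_le_sq, Real.abs_sinh]
    exact Real.self_le_sinh_iff.2 (abs_nonneg _)
  refine (sq_le_sq₀ (Real.cosh_pos _).le (by positivity)).1 ?_
  rw [mul_pow, Real.sq_sqrt zero_le_two, sq_norm_cos]
  -- `2 * sin x ^ 2 ≤ 1 + sinh y ^ 2 = cosh y ^ 2`
  linarith [Real.sin_sq_le_one z.re, Real.cosh_sq z.im]

theorem exp_abs_im_le_mul_norm_cos {N : ℕ} {z : ℂ} (hz : ‖z‖ = N * Real.pi) :
    Real.exp |z.im| ≤ 2 * √2 * ‖cos z‖ := by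
  have exp_le : Real.exp |z.im| ≤ 2 * Real.cosh z.im := by
    rw [Real.cosh_eq]; linarith [Real.exp_abs_le z.im]
  linarith [cosh_im_le_sqrt_two_mul_norm_cos hz]

/-- The zeros of the complex cosine, enumerated by `ℤ`: the nodes of Riesz's interpolation formula.
They are real numbers, cast to `ℂ` where the cosine is evaluated. -/
noncomputable def cosZero (k : ℤ) : ℝ := (2 * k + 1) * Real.pi / 2

theorem cosZero_injective : Function.Injective cosZero := by
  intro j k h
  have := Real.pi_pos
  have : (j : ℝ) = k := by
    unfold cosZero at h
    field_simp at h
    linarith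
  exact_mod_cast this

theorem cosZero_ne_zero (k : ℤ) : cosZero k ≠ 0 := by
  have : (2 * k + 1 : ℝ) ≠ 0 := by norm_cast; omega
  have := Real.pi_ne_zero
  unfold cosZero
  positivity

theorem cos_eq_zero_iff_exists_cosZero {z : ℂ} : cos z = 0 ↔ ∃ k, (cosZero k : ℂ) = z := by
  simp [cos_eq_zero_iff, cosZero, eq_comm]

theorem cos_cosZero (k : ℤ) : cos (cosZero k) = 0 :=
  cos_eq_zero_iff_exists_cosZero.2 ⟨k, rfl⟩

theorem sin_cosZero (k : ℤ) : sin (cosZero k) = (-1) ^ k := by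
  have : Real.sin (cosZero k) = (-1) ^ k := by
    have cosZero_eq : cosZero k = Real.pi / 2 + k * Real.pi := by unfold cosZero; ring
    rw [cosZero_eq, Real.sin_add_int_mul_pi, Real.sin_pi_div_two, mul_one]
  rw [← ofReal_sin, this]
  push_cast
  rfl

theorem abs_cosZero_lt_of_mem_Ico {N : ℕ} {k : ℤ} (hk : k ∈ Finset.Ico (-N : ℤ) N) :
    |cosZero k| < N * Real.pi := by
  obtain ⟨hk_lower, hk_upper⟩ := Finset.mem_Ico.1 hk
  have lower : (-N : ℝ) ≤ k := by exact_mod_cast hk_lower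
  have upper : (k + 1 : ℝ) ≤ N := by exact_mod_cast hk_upper
  rw [cosZero, abs_lt]
  constructor <;> nlinarith [Real.pi_pos]

theorem mem_Ico_of_abs_cosZero_le {N : ℕ} {k : ℤ} (hk : |cosZero k| ≤ N * Real.pi) :
    k ∈ Finset.Ico (-N : ℤ) N := by
  have abs_le_two_mul : |(2 * k + 1 : ℝ)| ≤ 2 * N := by
    rw [cosZero, mul_div_assoc, abs_mul, abs_of_pos Real.pi_div_two_pos] at hk
    nlinarith [Real.pi_pos]
  obtain ⟨lower, upper⟩ : -(2 * N : ℤ) ≤ 2 * k + 1 ∧ 2 * k + 1 ≤ (2 * N : ℤ) :=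
    abs_le.1 (by exact_mod_cast abs_le_two_mul)
  exact Finset.mem_Ico.2 ⟨by omega, by omega⟩

theorem cos_eq_zero_iff_exists_mem_Ico {N : ℕ} {z : ℂ} (hz : ‖z‖ ≤ N * Real.pi) :
    cos z = 0 ↔ ∃ k ∈ Finset.Ico (-N : ℤ) N, (cosZero k : ℂ) = z := by
  rw [cos_eq_zero_iff_exists_cosZero]
  refine ⟨?_, fun ⟨k, _, hk⟩ ↦ ⟨k, hk⟩⟩
  rintro ⟨k, rfl⟩
  exact ⟨k, mem_Ico_of_abs_cosZero_le (by simpa using hz), rfl⟩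

end Cosine

section RieszInterpolation

variable {E : Type*} [NormedAddCommGroup E] [NormedSpace ℂ E]

theorem residue_at_cosZero {G : ℂ → E} (hG0 : G 0 = 0) (k : ℤ) :
    (cos (cosZero k) - cosZero k * sin (cosZero k))⁻¹ • dslope G 0 (cosZero k) =
      -(((-1) ^ k / (cosZero k : ℂ) ^ 2) • G (cosZero k)) := by
  have ne_zero : (cosZero k : ℂ) ≠ 0 := ofReal_ne_zero.2 (cosZero_ne_zero k)
  have inv_neg_one_zpow : ((-1 : ℂ) ^ k)⁻¹ = (-1) ^ k := by rw [← inv_zpow, inv_neg_one]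
  rw [dslope_of_ne _ ne_zero, slope_def_module, hG0, sub_zero, sub_zero, cos_cosZero, sin_cosZero,
    smul_smul, ← neg_smul, zero_sub, inv_neg, mul_inv, inv_neg_one_zpow]
  congr 1
  field_simp

theorem circleIntegral_inv_mul_cos_smul_dslope [CompleteSpace E] {G : ℂ → E}
    (hG : Differentiable ℂ G) (hG0 : G 0 = 0) {N : ℕ} (hN : 0 < N) :
    (∮ z in C(0, N * Real.pi), (z * cos z)⁻¹ • dslope G 0 z) =
      (2 * Real.pi * I : ℂ) • (deriv G 0 - ∑ k ∈ Finset.Ico (-N : ℤ) N,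
        ((-1) ^ k / (cosZero k : ℂ) ^ 2) • G (cosZero k)) := by
  classical
  have hR : 0 < N * Real.pi := by positivity
  set zeros : Finset ℂ := (Finset.Ico (-N : ℤ) N).image fun k ↦ (cosZero k : ℂ) with zeros_def
  have zero_notMem : (0 : ℂ) ∉ zeros := by simp [zeros_def, cosZero_ne_zero]
  have zeros_subset_ball : ∀ a ∈ insert 0 zeros, a ∈ ball (0 : ℂ) (N * Real.pi) := by
    rw [Finset.forall_mem_insert, Finset.forall_mem_image]
    exact ⟨mem_ball_self hR, fun k hk ↦ by simpa using abs_cosZero_lt_of_mem_Ico hk⟩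
  have mul_cos_eq_zero_iff : ∀ z ∈ closedBall (0 : ℂ) (N * Real.pi),
      z * cos z = 0 ↔ z ∈ insert 0 zeros := fun z hz ↦ by
    rw [mul_eq_zero, cos_eq_zero_iff_exists_mem_Ico (mem_closedBall_zero_iff.1 hz),
      Finset.mem_insert, Finset.mem_image]
  have deriv_ne_zero : ∀ a ∈ insert 0 zeros, cos a - a * sin a ≠ 0 := by
    rw [Finset.forall_mem_insert, Finset.forall_mem_image]
    refine ⟨by simp, fun k _ ↦ ?_⟩
    simp [cos_cosZero, sin_cosZero, cosZero_ne_zero, zpow_ne_zero]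
  have injOn_cosZero : Set.InjOn (fun k ↦ (cosZero k : ℂ)) (Finset.Ico (-N : ℤ) N) :=
    (ofReal_injective.comp cosZero_injective).injOn
  have hasDerivAt_mul_cos : ∀ z : ℂ, HasDerivAt (fun w ↦ w * cos w) (cos z - z * sin z) z :=
    fun z ↦ ((hasDerivAt_id' z).mul (hasDerivAt_cos z)).congr_deriv (by ring)
  have differentiable_dslope : Differentiable ℂ (dslope G 0) := differentiableOn_univ.1
    ((differentiableOn_dslope univ_mem).2 hG.differentiableOn)
  rw [circleIntegral_inv_smul_eq_sum hR.le zeros_subset_ball (fun z _ ↦ differentiable_dslope z)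
    (fun z _ ↦ hasDerivAt_mul_cos z) mul_cos_eq_zero_iff deriv_ne_zero,
    Finset.sum_insert zero_notMem, zeros_def, Finset.sum_image injOn_cosZero,
    sub_eq_add_neg (deriv G 0), ← Finset.sum_neg_distrib]
  congr 2
  · simp
  · exact Finset.sum_congr rfl fun k _ ↦ residue_at_cosZero hG0 k

theorem norm_circleIntegral_inv_mul_cos_smul_dslope_le {G : ℂ → E} {M : ℝ} (hG0 : G 0 = 0)
    (hG : ∀ z, ‖G z‖ ≤ M * Real.exp |z.im|) {N : ℕ} (hN : 0 < N) :
    ‖∮ z in C(0, N * Real.pi), (z * cos z)⁻¹ • dslope G 0 z‖ ≤ 4 * √2 * M / N := by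
  have hR : 0 < N * Real.pi := by positivity
  have hM : 0 ≤ M := by simpa [hG0] using hG 0
  have integrand_le : ∀ z ∈ sphere (0 : ℂ) (N * Real.pi),
      ‖(z * cos z)⁻¹ • dslope G 0 z‖ ≤ 2 * √2 * M / (N * Real.pi) ^ 2 := by
    intro z hz
    rw [mem_sphere_zero_iff_norm] at hz
    have hz0 : z ≠ 0 := norm_pos_iff.1 (hz ▸ hR)
    have exp_le := exp_abs_im_le_mul_norm_cos hz
    have cos_pos : 0 < ‖cos z‖ := by
      have := (Real.exp_pos |z.im|).trans_le exp_le
      exact pos_of_mul_pos_right this (by positivity)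
    rw [dslope_of_ne _ hz0, slope_def_module, hG0, sub_zero, sub_zero, smul_smul, norm_smul,
      norm_mul, norm_inv, norm_inv, norm_mul, hz, ← mul_inv, ← div_eq_inv_mul,
      div_le_div_iff₀ (by positivity) (by positivity)]
    calc ‖G z‖ * (N * Real.pi) ^ 2 ≤ M * (2 * √2 * ‖cos z‖) * (N * Real.pi) ^ 2 := by
          gcongr
          exact (hG z).trans (by gcongr)
      _ = 2 * √2 * M * (N * Real.pi * ‖cos z‖ * (N * Real.pi)) := by ring
  refine (circleIntegral.norm_integral_le_of_norm_le_const hR.le integrand_le).trans_eq ?_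
  field_simp
  ring

theorem tendsto_riesz_interpolation [CompleteSpace E] {F : ℂ → E} {M : ℝ}
    (hF : Differentiable ℂ F) (hM : ∀ z, ‖F z‖ ≤ M * Real.exp |z.im|) :
    Tendsto (fun N : ℕ ↦ ∑ k ∈ Finset.Ico (-N : ℤ) N,
      ((-1) ^ k / (cosZero k : ℂ) ^ 2) • F (cosZero k)) atTop (𝓝 (deriv F 0)) := by
  -- Subtracting `cos z • F 0` removes the value at `0`, and with it the double pole at `0`,
  -- without affecting `deriv F 0` or the values at the zeros of the cosine.
  set G : ℂ → E := fun z ↦ F z - cos z • F 0 with G_def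
  have hG : Differentiable ℂ G := hF.sub (differentiable_cos.smul_const _)
  have hG0 : G 0 = 0 := by simp [G_def]
  have G_cosZero : ∀ k, G (cosZero k) = F (cosZero k) := fun k ↦ by
    simp [G_def, cos_cosZero]
  have deriv_G : deriv G 0 = deriv F 0 := by
    refine HasDerivAt.deriv (((hF 0).hasDerivAt.sub
      ((hasDerivAt_cos 0).smul_const (F 0))).congr_deriv ?_)
    simp
  have G_bound : ∀ z, ‖G z‖ ≤ (M + ‖F 0‖) * Real.exp |z.im| := fun z ↦ calc
    ‖G z‖ ≤ ‖F z‖ + ‖cos z‖ * ‖F 0‖ := norm_smul (cos z) (F 0) ▸ norm_sub_le _ _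
    _ ≤ M * Real.exp |z.im| + Real.exp |z.im| * ‖F 0‖ := by
      gcongr
      exacts [hM z, norm_cos_le_exp_abs_im z]
    _ = (M + ‖F 0‖) * Real.exp |z.im| := by ring
  have integral_tendsto : Tendsto
      (fun N : ℕ ↦ ∮ z in C(0, N * Real.pi), (z * cos z)⁻¹ • dslope G 0 z) atTop (𝓝 0) := by
    refine squeeze_zero_norm' ?_
      (tendsto_const_div_atTop_nhds_zero_nat (4 * √2 * (M + ‖F 0‖)))
    filter_upwards [eventually_gt_atTop 0] with N hN
    exact norm_circleIntegral_inv_mul_cos_smul_dslope_le hG0 G_bound hN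
  have := (integral_tendsto.const_smul (2 * Real.pi * I : ℂ)⁻¹).const_sub (deriv F 0)
  rw [smul_zero, sub_zero] at this
  refine this.congr' ?_
  filter_upwards [eventually_gt_atTop 0] with N hN
  rw [circleIntegral_inv_mul_cos_smul_dslope hG hG0 hN, inv_smul_smul₀ two_pi_I_ne_zero, deriv_G,
    sub_sub_cancel]
  simp only [G_cosZero]

theorem tendsto_sum_inv_sq_cosZero :
    Tendsto (fun N : ℕ ↦ ∑ k ∈ Finset.Ico (-N : ℤ) N, (cosZero k ^ 2)⁻¹) atTop (𝓝 1) := by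
  have h := tendsto_riesz_interpolation differentiable_sin
    (M := 1) fun z ↦ by simpa using norm_sin_le_exp_abs_im z
  rw [Complex.deriv_sin, cos_zero] at h
  have h' := (continuous_re.tendsto 1).comp h
  rw [one_re] at h'
  refine h'.congr fun N ↦ ?_
  rw [Function.comp_apply, re_sum]
  refine Finset.sum_congr rfl fun k _ ↦ ?_
  have : ((-1 : ℂ) ^ k) * (-1) ^ k = 1 := by rw [← mul_zpow]; simp
  rw [sin_cosZero, smul_eq_mul, div_mul_eq_mul_div, this, one_div]
  norm_cast

end RieszInterpolation

section ExponentialType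

variable {E : Type*} [NormedAddCommGroup E] [NormedSpace ℂ E]

/-- `F` has exponential type at most `σ`: for every `ε > 0`, `F z` is bounded by a constant multiple
of `exp ((σ + ε) * ‖z‖)`. Differentiability is not part of the definition. -/
def HasExponentialType (F : ℂ → E) (σ : ℝ) : Prop :=
  ∀ ε > (0 : ℝ), ∃ C > (0 : ℝ), ∀ z : ℂ, ‖F z‖ ≤ C * Real.exp ((σ + ε) * ‖z‖)

theorem norm_le_mul_exp_re_of_norm_imaginary_axis_le {f : ℂ → E} {τ C M : ℝ}
    (hf : DiffContOnCl ℂ f {w | 0 < w.re})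
    (hC : ∀ w : ℂ, 0 ≤ w.re → ‖f w‖ ≤ C * Real.exp (τ * ‖w‖)) (hM : ∀ y : ℝ, ‖f (y * I)‖ ≤ M)
    {w : ℂ} (hw : 0 ≤ w.re) : ‖f w‖ ≤ M * Real.exp (τ * w.re) := by
  set g : ℂ → E := fun w ↦ exp (-(τ * w)) • f w with g_def
  have norm_g : ∀ w, ‖g w‖ = Real.exp (-(τ * w.re)) * ‖f w‖ := fun w ↦ by
    simp [g_def, norm_smul, norm_exp]
  have hg : DiffContOnCl ℂ g {w | 0 < w.re} :=
    (Differentiable.diffContOnCl (by fun_prop)).smul hf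
  have g_growth : ∃ c < (2 : ℝ), ∃ B, g =O[Bornology.cobounded ℂ ⊓ 𝓟 {w | 0 < w.re}]
      fun w ↦ Real.exp (B * ‖w‖ ^ c) := by
    refine ⟨1, one_lt_two, |τ| + τ, Asymptotics.IsBigO.of_bound C ?_⟩
    filter_upwards [mem_inf_of_right (mem_principal_self _)] with w hw
    have neg_le : -(τ * w.re) ≤ |τ| * ‖w‖ := (neg_le_abs _).trans <| by
      rw [abs_mul]
      gcongr
      exact abs_re_le_norm w
    calc ‖g w‖ = Real.exp (-(τ * w.re)) * ‖f w‖ := norm_g w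
      _ ≤ Real.exp (|τ| * ‖w‖) * (C * Real.exp (τ * ‖w‖)) := by
        gcongr
        exact hC w (le_of_lt hw)
      _ = C * ‖Real.exp ((|τ| + τ) * ‖w‖ ^ (1 : ℝ))‖ := by
        rw [Real.norm_of_nonneg (Real.exp_pos _).le, Real.rpow_one, add_mul, Real.exp_add]
        ring
  have g_bounded_real : IsBoundedUnder (· ≤ ·) atTop fun x : ℝ ↦ ‖g x‖ := by
    refine ⟨C, eventually_map.2 ?_⟩
    filter_upwards [eventually_ge_atTop 0] with x hx
    rw [norm_g, ofReal_re, Real.exp_neg, inv_mul_le_iff₀' (Real.exp_pos _)]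
    simpa [abs_of_nonneg hx] using hC x (by simpa using hx)
  have g_le := PhragmenLindelof.right_half_plane_of_bounded_on_real hg g_growth g_bounded_real
    (fun y ↦ by simpa [norm_g] using hM y) hw
  rwa [norm_g, Real.exp_neg, inv_mul_le_iff₀' (Real.exp_pos _)] at g_le

theorem norm_le_mul_exp_abs_im_of_norm_le_mul_exp_norm {F : ℂ → E} {τ C M : ℝ}
    (hF : Differentiable ℂ F) (hC : ∀ z, ‖F z‖ ≤ C * Real.exp (τ * ‖z‖))
    (hM : ∀ x : ℝ, ‖F x‖ ≤ M) (z : ℂ) : ‖F z‖ ≤ M * Real.exp (τ * |z.im|) := by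
  have rotated : ∀ u : ℂ, ‖u‖ = 1 → (∃ s : ℝ, u * I = s) → ∀ w : ℂ, 0 ≤ w.re →
      ‖F (u * w)‖ ≤ M * Real.exp (τ * w.re) := by
    rintro u hu ⟨s, hs⟩ w hw
    refine norm_le_mul_exp_re_of_norm_imaginary_axis_le (C := C)
      (f := fun w ↦ F (u * w)) (Differentiable.diffContOnCl (by fun_prop))
      (fun w _ ↦ ?_) (fun y ↦ ?_) hw
    · simpa [hu] using hC (u * w)
    · rw [mul_left_comm, hs, ← ofReal_mul]
      exact hM _
  obtain him | him := le_total 0 z.im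
  · simpa [← mul_assoc, abs_of_nonneg him] using
      rotated I (by simp) ⟨-1, by simp⟩ (-I * z) (by simpa)
  · simpa [← mul_assoc, abs_of_nonpos him] using
      rotated (-I) (by simp) ⟨1, by simp⟩ (I * z) (by simpa)

theorem HasExponentialType.norm_le_mul_exp_abs_im {F : ℂ → E} {σ M : ℝ}
    (hσ : HasExponentialType F σ) (hF : Differentiable ℂ F) (hM : ∀ x : ℝ, ‖F x‖ ≤ M) (z : ℂ) :
    ‖F z‖ ≤ M * Real.exp (σ * |z.im|) := by
  have bound_of_pos : ∀ ε > 0, ‖F z‖ ≤ M * Real.exp ((σ + ε) * |z.im|) := fun ε hε ↦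
    let ⟨_, _, hC⟩ := hσ ε hε
    norm_le_mul_exp_abs_im_of_norm_le_mul_exp_norm hF hC hM z
  have bound_tendsto : Tendsto (fun ε : ℝ ↦ M * Real.exp ((σ + ε) * |z.im|)) (𝓝[>] 0)
      (𝓝 (M * Real.exp (σ * |z.im|))) := by
    have : Continuous fun ε : ℝ ↦ M * Real.exp ((σ + ε) * |z.im|) := by fun_prop
    simpa using (this.tendsto 0).mono_left nhdsWithin_le_nhds
  exact ge_of_tendsto bound_tendsto (eventually_mem_nhdsWithin.mono bound_of_pos)

end ExponentialType

section Bernstein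

variable {E : Type*} [NormedAddCommGroup E] [NormedSpace ℂ E]

theorem norm_deriv_zero_le_of_norm_le_mul_exp_abs_im_of_completeSpace [CompleteSpace E]
    {F : ℂ → E} {M : ℝ} (hF : Differentiable ℂ F) (hM : ∀ z, ‖F z‖ ≤ M * Real.exp |z.im|) :
    ‖deriv F 0‖ ≤ M := by
  have norm_real_le : ∀ x : ℝ, ‖F x‖ ≤ M := fun x ↦ by simpa using hM x
  have sum_le : ∀ N : ℕ, ‖∑ k ∈ Finset.Ico (-N : ℤ) N,
      ((-1) ^ k / (cosZero k : ℂ) ^ 2) • F (cosZero k)‖ ≤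
        (∑ k ∈ Finset.Ico (-N : ℤ) N, (cosZero k ^ 2)⁻¹) * M := by
    intro N
    rw [Finset.sum_mul]
    refine norm_sum_le_of_le _ fun k _ ↦ ?_
    have norm_coeff : ‖(-1) ^ k / (cosZero k : ℂ) ^ 2‖ = (cosZero k ^ 2)⁻¹ := by simp
    rw [norm_smul, norm_coeff]
    gcongr
    exact norm_real_le _
  simpa using le_of_tendsto_of_tendsto' (tendsto_riesz_interpolation hF hM).norm
    (tendsto_sum_inv_sq_cosZero.mul_const M) sum_le

theorem norm_deriv_zero_le_of_norm_le_mul_exp_abs_im {F : ℂ → E} {M : ℝ} (hF : Differentiable ℂ F)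
    (hM : ∀ z, ‖F z‖ ≤ M * Real.exp |z.im|) : ‖deriv F 0‖ ≤ M := by
  let toCompl : E →L[ℂ] UniformSpace.Completion E := UniformSpace.Completion.toComplL
  have norm_toCompl : ∀ v, ‖toCompl v‖ = ‖v‖ := UniformSpace.Completion.norm_coe
  have deriv_comp : deriv (toCompl ∘ F) 0 = toCompl (deriv F 0) :=
    (toCompl.hasFDerivAt.comp_hasDerivAt 0 (hF 0).hasDerivAt).deriv
  rw [← norm_toCompl, ← deriv_comp]
  exact norm_deriv_zero_le_of_norm_le_mul_exp_abs_im_of_completeSpace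
    (toCompl.differentiable.comp hF) fun z ↦ (norm_toCompl (F z)).trans_le (hM z)

theorem norm_deriv_ofReal_le_of_norm_le_mul_exp_abs_im {F : ℂ → E} {σ M : ℝ} (hσ : 0 < σ)
    (hF : Differentiable ℂ F) (hM : ∀ z, ‖F z‖ ≤ M * Real.exp (σ * |z.im|)) (x : ℝ) :
    ‖deriv F x‖ ≤ σ * M := by
  set G : ℂ → E := fun z ↦ F (x + (σ⁻¹ : ℝ) * z)
  have hG : Differentiable ℂ G := hF.comp (by fun_prop)
  have G_bound : ∀ z, ‖G z‖ ≤ M * Real.exp |z.im| := fun z ↦ by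
    have im_eq : σ * |(x + (σ⁻¹ : ℝ) * z : ℂ).im| = |z.im| := by
      rw [add_im, ofReal_im, zero_add, im_ofReal_mul, abs_mul, abs_of_pos (inv_pos.2 hσ),
        mul_inv_cancel_left₀ hσ.ne']
    exact im_eq ▸ hM _
  have deriv_G : deriv G 0 = ((σ⁻¹ : ℝ) : ℂ) • deriv F x := by
    rw [deriv_comp_mul_left ((σ⁻¹ : ℝ) : ℂ) (fun z ↦ F (x + z)), deriv_comp_const_add,
      mul_zero, add_zero]
  have := norm_deriv_zero_le_of_norm_le_mul_exp_abs_im hG G_bound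
  rwa [deriv_G, norm_smul, norm_real, norm_inv, Real.norm_of_nonneg hσ.le,
    inv_mul_le_iff₀ hσ] at this

end Bernstein

/-- (Bernstein inequality for Banach-space-valued entire functions.)
Let `E` be a complex Banach space and `F : ℂ → E` an entire function of exponential type `σ`
with `sup_{x∈ℝ} ‖F(x)‖ ≤ M < ∞`. Then `sup_{x∈ℝ} ‖F'(x)‖ ≤ σ·M`. -/
theorem stmt2 {E : Type*} [NormedAddCommGroup E] [NormedSpace ℂ E]
    (F : ℂ → E) (σ M : ℝ) (hσ : 0 < σ)
    (hF : Differentiable ℂ F)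
    (htype : ∀ ε > (0 : ℝ), ∃ C > (0 : ℝ), ∀ z : ℂ, ‖F z‖ ≤ C * Real.exp ((σ + ε) * ‖z‖))
    (hM : ∀ x : ℝ, ‖F x‖ ≤ M) :
    ∀ x : ℝ, ‖deriv F x‖ ≤ σ * M := by
  have hF_type : HasExponentialType F σ := htype
  exact norm_deriv_ofReal_le_of_norm_le_mul_exp_abs_im hσ hF (hF_type.norm_le_mul_exp_abs_im hF hM)
end

section
/- Suppose f ∈ B^s_{∞,1}(ℝ) for some s ∈ (1,2]. Let S_f(A;H) := f(A+H) − f(A) − Df(A;H) be the first-order Taylor remainder of the operator function. Then for all bounded self-adjoint A, H, H': ‖S_f(A;H') − S_f(A;H)‖ ≤ 4‖f‖_{B^s_{∞,1}} (δ(H,H'))^{s−1} ‖H'−H‖, where δ(H,H') := min(‖H‖,‖H'‖) + ‖H'−H‖/2. In particular (H'=0), ‖S_f(A;H)‖ ≤ 2^{3−s}‖f‖_{B^s_{∞,1}}‖H‖^s. -/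
/-!
Bernstein's inequality `|h'| ≤ σ` on `ℝ`, for an entire function `h` of exponential type `σ` that is
real and bounded by `1` on `ℝ`, comes from composing `h` with the Chebyshev polynomials `T_n`: each
`T_n ∘ h` is bounded by `1` on `ℝ`, so Phragmén–Lindelöf gives `|T_n (h z)| ≤ exp (n σ |im z|)`.
Writing `h z = cos ζ` and letting `n → ∞` yields `|im ζ| ≤ σ |im z|`, hence
`|im (h z)| ≤ sinh (σ |im z|)`, and the derivative is read off as `im z → 0`. Duality extends the
inequality to vector-valued functions.

Each Littlewood–Paley piece `f_n` defines an entire map `B ↦ f_n(B)` on the C⋆-algebra, of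
exponential type `σ_n = 2^(n+1)` and bounded by `‖f_n‖_∞` on the self-adjoint elements. Bernstein's
inequality along real lines, applied once and twice, bounds its first and second derivatives there.
The increment of its Taylor remainder is therefore at most `2 σ_n ‖f_n‖_∞ ‖V' - V‖` and at most
`σ_n² ‖f_n‖_∞ δ(V, V') ‖V' - V‖`. Since `min(t, 1) ≤ t^(s-1)` for `1 ≤ s ≤ 2`, both bounds combine
to `4 · 2^(n s) ‖f_n‖_∞ δ(V, V')^(s-1) ‖V' - V‖`, which is summed over `n`.
-/

open Complex Filter Topology
open scoped ComplexConjugate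

section ExponentialType

variable {E G : Type*} {σ M : ℝ}

/-- `F` has exponential type at most `σ`: `‖F x‖ = O(exp (τ ‖x‖))` on the whole space for every
`τ > σ`. Analyticity of `F` is not part of the definition. -/
def IsOfExpType [Norm E] [Norm G] (σ : ℝ) (F : E → G) : Prop :=
  ∀ τ > σ, ∃ C, 0 ≤ C ∧ ∀ x, ‖F x‖ ≤ C * Real.exp (τ * ‖x‖)

theorem exists_gt_mul_le {σ τ c : ℝ} (hc : 0 ≤ c) (h : σ * c < τ) : ∃ ρ > σ, ρ * c ≤ τ := by
  have hgap : 0 < τ - σ * c := sub_pos.2 h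
  refine ⟨σ + (τ - σ * c) / (c + 1), lt_add_of_pos_right _ (div_pos hgap (by positivity)), ?_⟩
  have : (τ - σ * c) / (c + 1) * c ≤ τ - σ * c := by
    rw [div_mul_eq_mul_div, div_le_iff₀ (by positivity)]
    nlinarith
  linarith

namespace IsOfExpType

theorem of_forall_pos_add [Norm E] [Norm G] {F : E → G}
    (h : ∀ ε > (0 : ℝ), ∃ C > (0 : ℝ), ∀ x, ‖F x‖ ≤ C * Real.exp ((σ + ε) * ‖x‖)) :
    IsOfExpType σ F := by
  intro τ hτ
  obtain ⟨C, hC, hle⟩ := h (τ - σ) (sub_pos.2 hτ)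
  exact ⟨C, hC.le, by simpa using hle⟩

theorem of_norm_le_mul {K : Type*} [Norm E] [Norm G] [Norm K] {F : E → G} {F' : E → K}
    (hF : IsOfExpType σ F) {c : ℝ} (hc : 0 ≤ c) (hle : ∀ x, ‖F' x‖ ≤ c * ‖F x‖) :
    IsOfExpType σ F' := by
  intro τ hτ
  obtain ⟨C, hC, hFC⟩ := hF τ hτ
  refine ⟨c * C, by positivity, fun x => (hle x).trans ?_⟩
  rw [mul_assoc]
  gcongr
  exact hFC x

theorem comp_line [NormedAddCommGroup E] [NormedSpace ℂ E] [Norm G] {F : E → G}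
    (hF : IsOfExpType σ F) (hσ : 0 ≤ σ) (x v : E) :
    IsOfExpType (σ * ‖v‖) fun z : ℂ => F (x + z • v) := by
  intro τ hτ
  obtain ⟨ρ, hρ, hρτ⟩ := exists_gt_mul_le (norm_nonneg v) hτ
  have hρ0 : 0 ≤ ρ := hσ.trans hρ.le
  obtain ⟨C, hC, hFC⟩ := hF ρ hρ
  refine ⟨C * Real.exp (ρ * ‖x‖), by positivity, fun z => (hFC _).trans ?_⟩
  rw [mul_assoc, ← Real.exp_add]
  gcongr
  calc ρ * ‖x + z • v‖ ≤ ρ * (‖x‖ + ‖z‖ * ‖v‖) := by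
        gcongr
        exact (norm_add_le _ _).trans_eq (by rw [norm_smul])
    _ = ρ * ‖x‖ + ρ * ‖v‖ * ‖z‖ := by ring
    _ ≤ ρ * ‖x‖ + τ * ‖z‖ := by gcongr

end IsOfExpType

theorem norm_le_mul_exp_im_of_lt [NormedAddCommGroup G] [NormedSpace ℂ G] {g : ℂ → G}
    (hd : Differentiable ℂ g) (hg : IsOfExpType σ g) (hσ : 0 ≤ σ) (hM : ∀ x : ℝ, ‖g x‖ ≤ M)
    {τ : ℝ} (hτ : σ < τ) {z : ℂ} (hz : 0 ≤ z.im) :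
    ‖g z‖ ≤ M * Real.exp (τ * z.im) := by
  have hτ0 : 0 ≤ τ := hσ.trans hτ.le
  obtain ⟨C, -, hgC⟩ := hg.comp_line hσ (z.re : ℂ) I τ (by simpa using hτ)
  -- Phragmén–Lindelöf in the half-plane `0 < re w`, where `z` corresponds to `w = z.im`.
  set u : ℂ → G := fun w => cexp (-τ * w) • g (z.re + w • I)
  have norm_u (w : ℂ) : ‖u w‖ = Real.exp (-(τ * w.re)) * ‖g (z.re + w • I)‖ := by
    simp [u, norm_smul, Complex.norm_exp]
  have hu : ‖u z.im‖ ≤ M := by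
    refine PhragmenLindelof.right_half_plane_of_bounded_on_real
      (Differentiable.diffContOnCl (by fun_prop)) ⟨1, one_lt_two, 2 * τ, ?_⟩
      ⟨C, ?_⟩ (fun t => ?_) (by simpa using hz)
    · refine Asymptotics.IsBigO.of_bound C (Eventually.of_forall fun w => ?_)
      rw [norm_u, Real.norm_eq_abs, Real.abs_exp, Real.rpow_one]
      have hre : -(τ * w.re) ≤ τ * ‖w‖ := by
        rw [← mul_neg]
        exact mul_le_mul_of_nonneg_left ((neg_le_abs _).trans (abs_re_le_norm w)) hτ0
      calc Real.exp (-(τ * w.re)) * ‖g (z.re + w • I)‖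
          ≤ Real.exp (τ * ‖w‖) * (C * Real.exp (τ * ‖w‖)) := by gcongr; exact hgC w
        _ = C * Real.exp (2 * τ * ‖w‖) := by rw [mul_left_comm, ← Real.exp_add]; ring_nf
    · rw [eventually_map]
      filter_upwards [eventually_ge_atTop (0 : ℝ)] with t ht
      have hgt := hgC t
      rw [norm_real, Real.norm_of_nonneg ht] at hgt
      rwa [norm_u, ofReal_re, Real.exp_neg, inv_mul_le_iff₀' (Real.exp_pos _)]
    · have hreal : (z.re : ℂ) + (t * I) • I = ((z.re - t : ℝ) : ℂ) := by
        push_cast [smul_eq_mul]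
        linear_combination (t : ℂ) * I_mul_I
      rw [norm_u, hreal]
      simpa using hM (z.re - t)
  rw [norm_u, ofReal_re, Real.exp_neg, inv_mul_le_iff₀ (Real.exp_pos _), smul_eq_mul,
    re_add_im] at hu
  exact hu.trans_eq (mul_comm _ _)

theorem norm_le_mul_exp_im_of_norm_ofReal_le [NormedAddCommGroup G] [NormedSpace ℂ G] {g : ℂ → G}
    (hd : Differentiable ℂ g) (hg : IsOfExpType σ g) (hσ : 0 ≤ σ) (hM : ∀ x : ℝ, ‖g x‖ ≤ M)
    {z : ℂ} (hz : 0 ≤ z.im) :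
    ‖g z‖ ≤ M * Real.exp (σ * z.im) := by
  have hlimit : Tendsto (fun τ => M * Real.exp (τ * z.im)) (𝓝[>] σ)
      (𝓝 (M * Real.exp (σ * z.im))) :=
    (Continuous.tendsto (by fun_prop) σ).mono_left nhdsWithin_le_nhds
  refine ge_of_tendsto hlimit (eventually_nhdsWithin_of_forall fun τ hτ => ?_)
  exact norm_le_mul_exp_im_of_lt hd hg hσ hM hτ hz

end ExponentialType

section Bernstein

variable {E : Type*} [NormedAddCommGroup E] [NormedSpace ℂ E] {σ M : ℝ}

theorem two_mul_norm_cos (ζ : ℂ) : 2 * ‖cos ζ‖ = ‖cexp (ζ * I) + cexp (-ζ * I)‖ := by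
  rw [← Complex.two_cos]; simp

theorem norm_cos_le_cosh_im (ζ : ℂ) : ‖cos ζ‖ ≤ Real.cosh ζ.im := by
  have h := norm_add_le (cexp (ζ * I)) (cexp (-ζ * I))
  rw [← two_mul_norm_cos, Complex.norm_exp, Complex.norm_exp] at h
  simp only [neg_mul, neg_re, mul_I_re, neg_neg] at h
  rw [Real.cosh_eq]
  linarith

theorem abs_sinh_im_le_norm_cos (ζ : ℂ) : |Real.sinh ζ.im| ≤ ‖cos ζ‖ := by
  have h := abs_norm_sub_norm_le (cexp (ζ * I)) (-cexp (-ζ * I))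
  rw [sub_neg_eq_add, ← two_mul_norm_cos, norm_neg, Complex.norm_exp, Complex.norm_exp] at h
  simp only [neg_mul, neg_re, mul_I_re, neg_neg] at h
  rw [Real.sinh_eq, abs_div, abs_two, abs_sub_comm]
  linarith

theorem abs_im_cos_le_abs_sinh_im (ζ : ℂ) : |(cos ζ).im| ≤ |Real.sinh ζ.im| := by
  have him : (cos ζ).im = -(Real.sin ζ.re * Real.sinh ζ.im) := by
    rw [Complex.cos_eq]
    simp only [← ofReal_cos, ← ofReal_sin, ← ofReal_cosh, ← ofReal_sinh]
    simp [-ofReal_cos, -ofReal_sin, -ofReal_cosh, -ofReal_sinh]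
  rw [him, abs_neg, abs_mul]
  exact mul_le_of_le_one_left (abs_nonneg _) (Real.abs_sin_le_one _)

theorem cosh_le_exp_abs (v : ℝ) : Real.cosh v ≤ Real.exp |v| := by
  rw [← Real.cosh_abs, Real.cosh_eq]
  have : Real.exp (-|v|) ≤ Real.exp |v| := Real.exp_le_exp.2 (neg_le_self (abs_nonneg v))
  linarith

theorem exp_abs_le_two_mul_abs_sinh_add_one (v : ℝ) : Real.exp |v| ≤ 2 * |Real.sinh v| + 1 := by
  rw [Real.abs_sinh, Real.sinh_eq]
  have : Real.exp (-|v|) ≤ 1 := Real.exp_le_one_iff.2 (by simp)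
  linarith

theorem norm_eval_chebyshevT_le (n : ℕ) (w : ℂ) :
    ‖(Polynomial.Chebyshev.T ℂ n).eval w‖ ≤ (2 * ‖w‖ + 1) ^ n := by
  obtain ⟨ζ, rfl⟩ := Complex.cos_surjective w
  rw [Polynomial.Chebyshev.T_complex_cos]
  calc ‖cos (((n : ℤ) : ℂ) * ζ)‖ ≤ Real.cosh (((n : ℤ) : ℂ) * ζ).im := norm_cos_le_cosh_im _
    _ ≤ Real.exp (n * |ζ.im|) := by
      have him : (((n : ℤ) : ℂ) * ζ).im = n * ζ.im := by simp
      rw [him]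
      simpa [abs_mul] using cosh_le_exp_abs (n * ζ.im)
    _ = Real.exp |ζ.im| ^ n := Real.exp_nat_mul _ _
    _ ≤ (2 * ‖cos ζ‖ + 1) ^ n := by
      gcongr
      linarith [exp_abs_le_two_mul_abs_sinh_add_one ζ.im, abs_sinh_im_le_norm_cos ζ]

theorem IsOfExpType.chebyshevT_comp {h : ℂ → ℂ} (hh : IsOfExpType σ h) (hσ : 0 ≤ σ) (n : ℕ) :
    IsOfExpType (σ * n) fun z => (Polynomial.Chebyshev.T ℂ n).eval (h z) := by
  intro τ hτ
  obtain ⟨ρ, hρ, hρτ⟩ := exists_gt_mul_le n.cast_nonneg hτ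
  have hρ0 : 0 ≤ ρ := hσ.trans hρ.le
  obtain ⟨C, hC, hhC⟩ := hh ρ hρ
  refine ⟨(2 * C + 1) ^ n, by positivity, fun z => (norm_eval_chebyshevT_le n (h z)).trans ?_⟩
  have hbase : 2 * ‖h z‖ + 1 ≤ (2 * C + 1) * Real.exp (ρ * ‖z‖) := by
    linarith [hhC z, Real.one_le_exp (by positivity : 0 ≤ ρ * ‖z‖)]
  calc (2 * ‖h z‖ + 1) ^ n ≤ ((2 * C + 1) * Real.exp (ρ * ‖z‖)) ^ n := by gcongr
    _ = (2 * C + 1) ^ n * Real.exp (ρ * n * ‖z‖) := by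
      rw [mul_pow, ← Real.exp_nat_mul]; ring_nf
    _ ≤ (2 * C + 1) ^ n * Real.exp (τ * ‖z‖) := by gcongr

theorem norm_eval_chebyshevT_le_one {w : ℂ} (him : w.im = 0) (hw : ‖w‖ ≤ 1) (n : ℕ) :
    ‖(Polynomial.Chebyshev.T ℂ n).eval w‖ ≤ 1 := by
  obtain ⟨r, rfl⟩ : ∃ r : ℝ, (r : ℂ) = w := ⟨w.re, Complex.ext rfl him.symm⟩
  rw [norm_real, Real.norm_eq_abs] at hw
  rw [← Polynomial.Chebyshev.complex_ofReal_eval_T, norm_real, Real.norm_eq_abs]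
  exact Polynomial.Chebyshev.abs_eval_T_real_le_one _ hw

theorem le_of_forall_abs_sinh_nat_mul_le_exp {v b : ℝ} (hb : 0 ≤ b)
    (h : ∀ n : ℕ, |Real.sinh (n * v)| ≤ Real.exp (n * b)) : |v| ≤ b := by
  by_contra! hlt
  have hgap : 0 < |v| - b := sub_pos.2 hlt
  obtain ⟨n, hn⟩ := exists_nat_gt (2 / (|v| - b))
  rw [div_lt_iff₀ hgap] at hn
  have hexp : Real.exp (n * (|v| - b)) * Real.exp (n * b) ≤ 3 * Real.exp (n * b) := by
    rw [← Real.exp_add]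
    calc Real.exp (n * (|v| - b) + n * b) = Real.exp |n * v| := by
          rw [abs_mul, Nat.abs_cast]; ring_nf
      _ ≤ 2 * |Real.sinh (n * v)| + 1 := exp_abs_le_two_mul_abs_sinh_add_one _
      _ ≤ 3 * Real.exp (n * b) := by
        linarith [h n, Real.one_le_exp (by positivity : 0 ≤ n * b)]
  have := le_of_mul_le_mul_right hexp (Real.exp_pos _)
  linarith [Real.add_one_le_exp (n * (|v| - b))]

section RealOnReals

variable {h : ℂ → ℂ} (hd : Differentiable ℂ h) (hh : IsOfExpType σ h) (hσ : 0 ≤ σ)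
  (him : ∀ x : ℝ, (h x).im = 0) (hb : ∀ x : ℝ, ‖h x‖ ≤ 1)

include hd hh hσ him hb

-- `T_n ∘ h` is bounded by `1` on `ℝ` and has type `nσ`, and `T_n (cos ζ) = cos (n ζ)` grows like
-- `exp (n |im ζ|)`.
theorem abs_im_le_of_eq_cos {z ζ : ℂ} (hz : 0 ≤ z.im) (hζ : h z = cos ζ) :
    |ζ.im| ≤ σ * z.im := by
  refine le_of_forall_abs_sinh_nat_mul_le_exp (by positivity) fun n => ?_
  have hT := norm_le_mul_exp_im_of_norm_ofReal_le (by fun_prop) (hh.chebyshevT_comp hσ n)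
    (by positivity) (fun x => norm_eval_chebyshevT_le_one (him x) (hb x) n) hz
  rw [hζ, Polynomial.Chebyshev.T_complex_cos] at hT
  refine (abs_sinh_im_le_norm_cos _).trans (hT.trans_eq ?_) |>.trans_eq' ?_
  · ring_nf
  · simp

theorem abs_im_le_sinh_im {z : ℂ} (hz : 0 ≤ z.im) : |(h z).im| ≤ Real.sinh (σ * z.im) := by
  obtain ⟨ζ, hζ⟩ := Complex.cos_surjective (h z)
  rw [← hζ]
  refine (abs_im_cos_le_abs_sinh_im ζ).trans ?_
  rw [Real.abs_sinh, Real.sinh_le_sinh]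
  exact abs_im_le_of_eq_cos hd hh hσ him hb hz hζ.symm

theorem re_deriv_ofReal_le (x : ℝ) : (deriv h x).re ≤ σ := by
  have hvertical : HasDerivAt (fun y : ℝ => (h (x + y * I)).im) (deriv h x).re 0 := by
    have hline : HasDerivAt (fun y : ℂ => (x : ℂ) + y * I) I ((0 : ℝ) : ℂ) := by
      simpa using ((hasDerivAt_id ((0 : ℝ) : ℂ)).mul_const I).const_add (x : ℂ)
    have hcomp : HasDerivAt (fun y : ℝ => h (x + y * I)) (deriv h x * I) 0 := by
      refine (HasDerivAt.comp _ ?_ hline).comp_ofReal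
      simpa using (hd x).hasDerivAt
    simpa [Function.comp_def] using imCLM.hasFDerivAt.comp_hasDerivAt (0 : ℝ) hcomp
  have hsinh : HasDerivAt (fun y => Real.sinh (σ * y)) σ 0 := by
    simpa using ((hasDerivAt_id (0 : ℝ)).const_mul σ).sinh
  have hright : 𝓝[>] (0 : ℝ) ≤ 𝓝[≠] 0 := nhdsWithin_mono _ fun y hy => ne_of_gt hy
  refine le_of_tendsto_of_tendsto ((hasDerivAt_iff_tendsto_slope.1 hvertical).mono_left hright)
    ((hasDerivAt_iff_tendsto_slope.1 hsinh).mono_left hright)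
    (eventually_nhdsWithin_of_forall fun y (hy : 0 < y) => ?_)
  have hle := abs_im_le_sinh_im hd hh hσ him hb (z := x + y * I) (by simpa using hy.le)
  rw [slope_def_field, slope_def_field]
  simp only [ofReal_zero, zero_mul, add_zero, him, mul_zero, Real.sinh_zero, sub_zero]
  gcongr
  simpa using (le_abs_self _).trans hle

end RealOnReals

/-- The function `z ↦ (ψ z + conj (ψ (conj z))) / 2`. It is entire when `ψ` is, and on the real
line it is the real part of `ψ`. -/
noncomputable def reExtension (ψ : ℂ → ℂ) (z : ℂ) : ℂ := (ψ z + conj (ψ (conj z))) / 2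

theorem reExtension_ofReal (ψ : ℂ → ℂ) (x : ℝ) : reExtension ψ x = ((ψ x).re : ℂ) := by
  rw [reExtension, conj_ofReal, add_conj, ofReal_mul, ofReal_ofNat,
    mul_div_cancel_left₀ _ two_ne_zero]

theorem hasDerivAt_reExtension {ψ : ℂ → ℂ} (hψ : Differentiable ℂ ψ) (z : ℂ) :
    HasDerivAt (reExtension ψ) (reExtension (deriv ψ) z) z := by
  have hconj := (hψ (conj z)).hasDerivAt.conj_conj
  rw [conj_conj] at hconj
  exact ((hψ z).hasDerivAt.add hconj).div_const 2

theorem IsOfExpType.reExtension {ψ : ℂ → ℂ} (hψ : IsOfExpType σ ψ) :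
    IsOfExpType σ (reExtension ψ) := by
  intro τ hτ
  obtain ⟨C, hC, hψC⟩ := hψ τ hτ
  refine ⟨C, hC, fun z => ?_⟩
  have hadd := norm_add_le (ψ z) (conj (ψ (conj z)))
  have hz := hψC z
  have hconj := hψC (conj z)
  rw [RCLike.norm_conj] at hadd hconj
  rw [_root_.reExtension, norm_div, Complex.norm_two, div_le_iff₀ two_pos]
  linarith

theorem re_deriv_le_of_norm_ofReal_le_one {ψ : ℂ → ℂ} (hd : Differentiable ℂ ψ)
    (hψ : IsOfExpType σ ψ) (hσ : 0 ≤ σ) (hb : ∀ x : ℝ, ‖ψ x‖ ≤ 1) (x : ℝ) :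
    (deriv ψ x).re ≤ σ := by
  have hle := re_deriv_ofReal_le (fun z => (hasDerivAt_reExtension hd z).differentiableAt)
    hψ.reExtension hσ (fun x => by rw [reExtension_ofReal, ofReal_im])
    (fun x => by
      rw [reExtension_ofReal, norm_real]
      exact (abs_re_le_norm _).trans (hb x)) x
  rwa [(hasDerivAt_reExtension hd x).deriv, reExtension_ofReal, ofReal_re] at hle

theorem norm_deriv_ofReal_le_mul {φ : ℂ → E} (hd : Differentiable ℂ φ) (hφ : IsOfExpType σ φ)
    (hσ : 0 ≤ σ) (hM : ∀ x : ℝ, ‖φ x‖ ≤ M) (x : ℝ) : ‖deriv φ x‖ ≤ σ * M := by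
  rcases ((norm_nonneg _).trans (hM 0)).eq_or_lt with rfl | hMpos
  · have hline : HasDerivAt (fun t : ℝ => φ t) (deriv φ x) x := by
      simpa [Function.comp_def] using (hd x).hasDerivAt.scomp x ofRealCLM.hasDerivAt
    have hzero : (fun t : ℝ => φ t) = fun _ => 0 := funext fun t => norm_le_zero_iff.1 (hM t)
    rw [hzero] at hline
    simp [hline.unique (hasDerivAt_const x 0)]
  · obtain ⟨g, hg1, hgx : g (deriv φ x) = (‖deriv φ x‖ : ℝ)⟩ := exists_dual_vector'' ℂ (deriv φ x)
    have hgle (z : ℂ) : ‖(M⁻¹ : ℂ) * g (φ z)‖ ≤ M⁻¹ * ‖φ z‖ := by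
      rw [norm_mul, norm_inv, norm_real, Real.norm_of_nonneg hMpos.le]
      gcongr
      simpa using g.le_of_opNorm_le hg1 (φ z)
    have hderiv : HasDerivAt (fun z => (M⁻¹ : ℂ) * g (φ z)) ((M⁻¹ : ℂ) * ‖deriv φ x‖) x := by
      rw [← hgx]
      exact (g.hasFDerivAt.comp_hasDerivAt (x : ℂ) (hd x).hasDerivAt).const_mul _
    have hle := re_deriv_le_of_norm_ofReal_le_one (by fun_prop)
      (hφ.of_norm_le_mul (by positivity) hgle) hσ
      (fun t => (hgle t).trans ((inv_mul_le_one₀ hMpos).2 (hM t))) x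
    rw [hderiv.deriv, ← ofReal_inv, ← ofReal_mul, ofReal_re, inv_mul_le_iff₀ hMpos] at hle
    exact hle.trans_eq (mul_comm _ _)

end Bernstein

section TaylorRemainder

variable {E G : Type*} [NormedAddCommGroup E] [NormedSpace ℂ E] [NormedAddCommGroup G]
  [NormedSpace ℂ G] {F : E → G} {σ M : ℝ}

theorem hasDerivAt_comp_line (hd : Differentiable ℂ F) (x v : E) (z : ℂ) :
    HasDerivAt (fun w : ℂ => F (x + w • v)) (fderiv ℂ F (x + z • v) v) z := by
  have hline : HasDerivAt (fun w : ℂ => x + w • v) v z := by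
    simpa using ((hasDerivAt_id z).smul_const v).const_add x
  exact (hd _).hasFDerivAt.comp_hasDerivAt z hline

theorem hasDerivAt_comp_real_line (hd : Differentiable ℂ F) (x v : E) (t : ℝ) :
    HasDerivAt (fun u : ℝ => F (x + u • v)) (fderiv ℂ F (x + t • v) v) t := by
  have hline : HasDerivAt (fun u : ℝ => x + u • v) v t := by
    simpa using ((hasDerivAt_id t).smul_const v).const_add x
  exact ((hd _).hasFDerivAt.restrictScalars ℝ).comp_hasDerivAt t hline

theorem IsOfExpType.fderiv_apply (hF : IsOfExpType σ F) (hd : Differentiable ℂ F) (hσ : 0 ≤ σ)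
    (v : E) : IsOfExpType σ fun x => fderiv ℂ F x v := by
  intro τ hτ
  have hτ0 : 0 ≤ τ := hσ.trans hτ.le
  obtain ⟨C, hC, hFC⟩ := hF τ hτ
  refine ⟨C * Real.exp (τ * ‖v‖), by positivity, fun x => ?_⟩
  have hcircle (z : ℂ) (hz : z ∈ Metric.sphere (0 : ℂ) 1) :
      ‖F (x + z • v)‖ ≤ C * Real.exp (τ * ‖v‖) * Real.exp (τ * ‖x‖) := by
    refine (hFC _).trans ?_
    rw [mul_assoc, ← Real.exp_add, ← mul_add, add_comm ‖v‖]
    gcongr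
    refine (norm_add_le _ _).trans_eq ?_
    rw [norm_smul, mem_sphere_zero_iff_norm.1 hz, one_mul]
  have hcauchy := Complex.norm_deriv_le_of_forall_mem_sphere_norm_le one_pos
    (Differentiable.diffContOnCl fun z => (hasDerivAt_comp_line hd x v z).differentiableAt) hcircle
  simpa [(hasDerivAt_comp_line hd x v 0).deriv] using hcauchy

theorem norm_image_sub_le_of_norm_deriv_le_affine {p p' : ℝ → G} {α β : ℝ}
    (hp : ∀ t, HasDerivAt p (p' t) t)
    (hle : ∀ t ∈ Set.Icc (0 : ℝ) 1, ‖p' t‖ ≤ α + t * β) : ‖p 1 - p 0‖ ≤ α + β / 2 := by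
  have hbarrier (t : ℝ) : HasDerivAt (fun u => u * α + u ^ 2 / 2 * β) (α + t * β) t := by
    have hlinear : HasDerivAt (fun u => u * α) α t := by
      simpa using (hasDerivAt_id t).mul_const α
    have hsquare : HasDerivAt (fun u => u ^ 2 / 2 * β) (t * β) t := by
      simpa using ((hasDerivAt_pow 2 t).div_const 2).mul_const β
    exact hlinear.add hsquare
  have h := image_norm_le_of_norm_deriv_right_le_deriv_boundary (f := fun t => p t - p 0)
    (fun t _ => ((hp t).sub_const _).continuousAt.continuousWithinAt)
    (fun t _ => ((hp t).sub_const _).hasDerivWithinAt) (by simp) hbarrier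
    (fun t ht => hle t (Set.Ico_subset_Icc_self ht)) (Set.right_mem_Icc.2 zero_le_one)
  exact h.trans_eq (by ring)

/-- The first-order Taylor remainder of `F` at `A` in the increment `V`. -/
noncomputable def taylorRemainder (F : E → G) (A V : E) : G := F (A + V) - F A - fderiv ℂ F A V

theorem taylorRemainder_sub_taylorRemainder (F : E → G) (A V V' : E) :
    taylorRemainder F A V' - taylorRemainder F A V =
      F (A + V') - F (A + V) - fderiv ℂ F A (V' - V) := by
  rw [taylorRemainder, taylorRemainder, map_sub]
  abel

theorem min_one_le_rpow {t θ : ℝ} (ht : 0 ≤ t) (hθ0 : 0 ≤ θ) (hθ1 : θ ≤ 1) :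
    min t 1 ≤ t ^ θ := by
  rcases le_total t 1 with h | h
  · exact (min_le_left _ _).trans (Real.self_le_rpow_of_le_one ht h hθ1)
  · exact (min_le_right _ _).trans (Real.one_le_rpow h hθ0)

section BoundedOnSubmodule

variable (hσ : 0 ≤ σ) {S : Submodule ℝ E} (hF : IsOfExpType σ F) (hM : ∀ x ∈ S, ‖F x‖ ≤ M)

include hσ hF hM

theorem norm_fderiv_apply_le (hd : Differentiable ℂ F) {x v : E} (hx : x ∈ S) (hv : v ∈ S) :
    ‖fderiv ℂ F x v‖ ≤ σ * M * ‖v‖ := by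
  have hbernstein := norm_deriv_ofReal_le_mul
    (fun z => (hasDerivAt_comp_line hd x v z).differentiableAt) (hF.comp_line hσ x v)
    (by positivity) (fun t => by
      rw [Complex.coe_smul]
      exact hM _ (S.add_mem hx (S.smul_mem t hv))) 0
  rw [(hasDerivAt_comp_line hd x v _).deriv, ofReal_zero, zero_smul, add_zero] at hbernstein
  exact hbernstein.trans_eq (by ring)

theorem norm_image_add_sub_le (hd : Differentiable ℂ F) {x v : E} (hx : x ∈ S) (hv : v ∈ S) :
    ‖F (x + v) - F x‖ ≤ σ * M * ‖v‖ := by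
  simpa using norm_image_sub_le_of_norm_deriv_le_segment_01'
    (fun t _ => (hasDerivAt_comp_real_line hd x v t).hasDerivWithinAt)
    (fun t _ => norm_fderiv_apply_le hσ hF hM hd (S.add_mem hx (S.smul_mem t hv)) hv)

-- The Lipschitz bound again, now for `x ↦ fderiv ℂ F x v`, which is of the same type and bounded
-- by `σ * M * ‖v‖` on `S`.
theorem norm_fderiv_add_apply_sub_le (hd : ContDiff ℂ 2 F) {x v w : E} (hx : x ∈ S) (hv : v ∈ S)
    (hw : w ∈ S) : ‖fderiv ℂ F (x + w) v - fderiv ℂ F x v‖ ≤ σ ^ 2 * M * ‖v‖ * ‖w‖ := by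
  have hd1 : Differentiable ℂ F := hd.differentiable two_ne_zero
  have hd2 : Differentiable ℂ fun x => fderiv ℂ F x v :=
    ((hd.fderiv_right (m := 1) le_rfl).clm_apply contDiff_const).differentiable one_ne_zero
  exact (norm_image_add_sub_le hσ (hF.fderiv_apply hd1 hσ v)
    (fun y hy => norm_fderiv_apply_le hσ hF hM hd1 hy hv) hd2 hx hw).trans_eq (by ring)

variable {A V V' : E} (hA : A ∈ S) (hV : V ∈ S) (hV' : V' ∈ S)

include hA hV hV'

theorem norm_taylorRemainder_sub_le_norm_add (hd : ContDiff ℂ 2 F) :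
    ‖taylorRemainder F A V' - taylorRemainder F A V‖
      ≤ σ ^ 2 * M * (‖V‖ + ‖V' - V‖ / 2) * ‖V' - V‖ := by
  have hd1 : Differentiable ℂ F := hd.differentiable two_ne_zero
  have hM0 : 0 ≤ M := (norm_nonneg _).trans (hM A hA)
  set W := V' - V with hW
  have hWS : W ∈ S := S.sub_mem hV' hV
  have hp (t : ℝ) : HasDerivAt (fun u : ℝ => F (A + V + u • W) - u • fderiv ℂ F A W)
      (fderiv ℂ F (A + V + t • W) W - fderiv ℂ F A W) t := by
    have hlinear : HasDerivAt (fun u : ℝ => u • fderiv ℂ F A W) (fderiv ℂ F A W) t := by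
      simpa using (hasDerivAt_id t).smul_const (fderiv ℂ F A W)
    exact (hasDerivAt_comp_real_line hd1 (A + V) W t).sub hlinear
  have hle (t : ℝ) (ht : t ∈ Set.Icc (0 : ℝ) 1) :
      ‖fderiv ℂ F (A + V + t • W) W - fderiv ℂ F A W‖
        ≤ σ ^ 2 * M * ‖W‖ * ‖V‖ + t * (σ ^ 2 * M * ‖W‖ * ‖W‖) := by
    rw [add_assoc]
    refine (norm_fderiv_add_apply_sub_le hσ hF hM hd hA hWS
      (S.add_mem hV (S.smul_mem t hWS))).trans ?_
    calc σ ^ 2 * M * ‖W‖ * ‖V + t • W‖ ≤ σ ^ 2 * M * ‖W‖ * (‖V‖ + t * ‖W‖) := by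
          gcongr
          exact (norm_add_le _ _).trans_eq (by rw [norm_smul, Real.norm_of_nonneg ht.1])
      _ = _ := by ring
  have h := norm_image_sub_le_of_norm_deriv_le_affine hp hle
  have hends : F (A + V + (1 : ℝ) • W) - (1 : ℝ) • fderiv ℂ F A W
      - (F (A + V + (0 : ℝ) • W) - (0 : ℝ) • fderiv ℂ F A W)
      = taylorRemainder F A V' - taylorRemainder F A V := by
    rw [taylorRemainder_sub_taylorRemainder, ← hW, one_smul, one_smul, zero_smul, zero_smul, hW,
      add_zero, sub_zero, add_assoc, add_sub_cancel]
    abel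
  rw [← hends]
  exact h.trans_eq (by ring)

theorem norm_taylorRemainder_sub_le_min (hd : ContDiff ℂ 2 F) :
    ‖taylorRemainder F A V' - taylorRemainder F A V‖
      ≤ σ ^ 2 * M * (min ‖V‖ ‖V'‖ + ‖V' - V‖ / 2) * ‖V' - V‖ := by
  rcases min_choice ‖V‖ ‖V'‖ with h | h <;> rw [h]
  · exact norm_taylorRemainder_sub_le_norm_add hσ hF hM hA hV hV' hd
  · rw [norm_sub_rev, norm_sub_rev V']
    exact norm_taylorRemainder_sub_le_norm_add hσ hF hM hA hV' hV hd

theorem norm_taylorRemainder_sub_le_two_mul (hd : Differentiable ℂ F) :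
    ‖taylorRemainder F A V' - taylorRemainder F A V‖ ≤ 2 * σ * M * ‖V' - V‖ := by
  have hW : V' - V ∈ S := S.sub_mem hV' hV
  have hlip := norm_image_add_sub_le hσ hF hM hd (S.add_mem hA hV) hW
  rw [add_assoc, add_sub_cancel] at hlip
  rw [taylorRemainder_sub_taylorRemainder]
  linarith [norm_sub_le (F (A + V') - F (A + V)) (fderiv ℂ F A (V' - V)),
    norm_fderiv_apply_le hσ hF hM hd hA hW]

theorem norm_taylorRemainder_sub_le_rpow (hd : ContDiff ℂ 2 F) {θ : ℝ} (hθ0 : 0 ≤ θ)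
    (hθ1 : θ ≤ 1) :
    ‖taylorRemainder F A V' - taylorRemainder F A V‖
      ≤ 2 * σ * M * (σ / 2 * (min ‖V‖ ‖V'‖ + ‖V' - V‖ / 2)) ^ θ * ‖V' - V‖ := by
  have hM0 : 0 ≤ M := (norm_nonneg _).trans (hM A hA)
  set δ := min ‖V‖ ‖V'‖ + ‖V' - V‖ / 2
  have hmin : ‖taylorRemainder F A V' - taylorRemainder F A V‖
      ≤ 2 * σ * M * ‖V' - V‖ * min (σ / 2 * δ) 1 := by
    rw [mul_min_of_nonneg _ _ (by positivity)]
    refine le_min ?_ ?_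
    · exact (norm_taylorRemainder_sub_le_min hσ hF hM hA hV hV' hd).trans_eq (by ring)
    · rw [mul_one]
      exact norm_taylorRemainder_sub_le_two_mul hσ hF hM hA hV hV' (hd.differentiable two_ne_zero)
  refine hmin.trans ?_
  rw [mul_right_comm]
  gcongr
  exact min_one_le_rpow (by positivity) hθ0 hθ1

end BoundedOnSubmodule

end TaylorRemainder

section EntireCalculus

/-- The `k`-th Taylor coefficient of `g` at the origin. -/
noncomputable def taylorCoeff (g : ℂ → ℂ) (k : ℕ) : ℂ := (k.factorial : ℂ)⁻¹ * iteratedDeriv k g 0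

variable {g : ℂ → ℂ} {σ : ℝ}

theorem hasSum_taylorCoeff_mul_pow (hd : Differentiable ℂ g) (z : ℂ) :
    HasSum (fun k => taylorCoeff g k * z ^ k) (g z) := by
  refine (Complex.hasSum_taylorSeries_of_entire hd 0 z).congr_fun fun k => ?_
  rw [taylorCoeff, sub_zero, smul_eq_mul, smul_eq_mul]
  ring

theorem summable_norm_taylorCoeff_mul_pow (hd : Differentiable ℂ g) {r : ℝ} (hr : 0 ≤ r) :
    Summable fun k => ‖taylorCoeff g k‖ * r ^ k := by
  simpa [abs_of_nonneg hr] using (hasSum_taylorCoeff_mul_pow hd (r : ℂ)).summable.norm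

theorem norm_taylorCoeff_mul_pow_le (hd : Differentiable ℂ g) {R B : ℝ} (hR : 0 < R)
    (hB : ∀ z, ‖z‖ = R → ‖g z‖ ≤ B) (k : ℕ) : ‖taylorCoeff g k‖ * R ^ k ≤ B := by
  have hcauchy := Complex.norm_iteratedDeriv_le_of_forall_mem_sphere_norm_le k hR hd.diffContOnCl
    fun z hz => hB z (mem_sphere_zero_iff_norm.1 hz)
  rw [le_div_iff₀ (by positivity)] at hcauchy
  rw [taylorCoeff, norm_mul, norm_inv, Complex.norm_natCast, mul_assoc,
    inv_mul_le_iff₀ (by positivity)]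
  exact hcauchy

variable {𝔸 : Type*} [NormedRing 𝔸] [NormedAlgebra ℂ 𝔸]

variable (𝔸) in
/-- The function `g(B) = ∑ₖ cₖ Bᵏ` of an element `B` of a complex Banach algebra, where the `cₖ` are
the Taylor coefficients of the entire function `g` at the origin. -/
noncomputable def entireCalculus (g : ℂ → ℂ) : 𝔸 → 𝔸 :=
  FormalMultilinearSeries.ofScalarsSum (taylorCoeff g)

variable [NormOneClass 𝔸]

theorem norm_taylorCoeff_smul_pow_le (g : ℂ → ℂ) (B : 𝔸) (k : ℕ) :
    ‖taylorCoeff g k • B ^ k‖ ≤ ‖taylorCoeff g k‖ * ‖B‖ ^ k := by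
  rw [norm_smul]
  gcongr
  exact norm_pow_le B k

variable [CompleteSpace 𝔸]

theorem hasSum_entireCalculus (hd : Differentiable ℂ g) (B : 𝔸) :
    HasSum (fun k => taylorCoeff g k • B ^ k) (entireCalculus 𝔸 g B) := by
  rw [entireCalculus, FormalMultilinearSeries.ofScalars_sum_eq]
  exact (Summable.of_norm_bounded (summable_norm_taylorCoeff_mul_pow hd (norm_nonneg B))
    (norm_taylorCoeff_smul_pow_le g B)).hasSum

theorem contDiff_entireCalculus (hd : Differentiable ℂ g) {n : WithTop ℕ∞} :
    ContDiff ℂ n (entireCalculus 𝔸 g) := by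
  have hradius : (FormalMultilinearSeries.ofScalars 𝔸 (taylorCoeff g)).radius = ⊤ := by
    refine FormalMultilinearSeries.radius_eq_top_of_summable_norm _ fun r => ?_
    simp_rw [FormalMultilinearSeries.ofScalars_norm]
    exact summable_norm_taylorCoeff_mul_pow hd r.2
  have hseries := (FormalMultilinearSeries.ofScalars 𝔸 (taylorCoeff g)).hasFPowerSeriesOnBall
    (hradius ▸ ENNReal.zero_lt_top)
  have hanalytic : AnalyticOnNhd ℂ (entireCalculus 𝔸 g) Set.univ := fun x _ =>
    hseries.analyticOnNhd x (by simp [hradius])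
  exact hanalytic.contDiff

-- Cauchy's estimates on the circle of radius `l (‖B‖ + 1)`, with `l > 1` close to `1`, bound the
-- Taylor series at `B` by a geometric series of ratio `l⁻¹`.
theorem IsOfExpType.entireCalculus (hg : IsOfExpType σ g) (hd : Differentiable ℂ g) (hσ : 0 ≤ σ) :
    IsOfExpType σ (entireCalculus 𝔸 g) := by
  intro τ hτ
  obtain ⟨ρ, hσρ, hρτ⟩ := exists_between hτ
  have hρ : 0 < ρ := hσ.trans_lt hσρ
  obtain ⟨C, hC, hgC⟩ := hg ρ hσρ
  set l := τ / ρ with hl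
  have hl1 : 1 < l := (one_lt_div hρ).2 hρτ
  have hl0 : 0 < l := one_pos.trans hl1
  have hgeom := hasSum_geometric_of_lt_one (inv_nonneg.2 hl0.le) (inv_lt_one_of_one_lt₀ hl1)
  refine ⟨C * Real.exp τ * (1 - l⁻¹)⁻¹, ?_, fun B => ?_⟩
  · have : 0 ≤ 1 - l⁻¹ := sub_nonneg.2 (inv_le_one_of_one_le₀ hl1.le)
    positivity
  have hterm (k : ℕ) : ‖taylorCoeff g k • B ^ k‖ ≤
      C * Real.exp τ * Real.exp (τ * ‖B‖) * l⁻¹ ^ k := by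
    have hcauchy := norm_taylorCoeff_mul_pow_le hd (R := l * (‖B‖ + 1)) (by positivity)
      (fun z hz => hz ▸ hgC z) k
    have hexponent : ρ * (l * (‖B‖ + 1)) = τ + τ * ‖B‖ := by rw [hl]; field_simp; ring
    rw [hexponent, Real.exp_add, ← mul_assoc] at hcauchy
    rw [inv_pow, ← div_eq_mul_inv, le_div_iff₀ (by positivity)]
    calc ‖taylorCoeff g k • B ^ k‖ * l ^ k
        ≤ ‖taylorCoeff g k‖ * (‖B‖ + 1) ^ k * l ^ k := by
          gcongr
          refine (norm_taylorCoeff_smul_pow_le g B k).trans ?_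
          gcongr
          exact le_add_of_nonneg_right zero_le_one
      _ = ‖taylorCoeff g k‖ * (l * (‖B‖ + 1)) ^ k := by rw [mul_pow]; ring
      _ ≤ C * Real.exp τ * Real.exp (τ * ‖B‖) := hcauchy
  rw [← (hasSum_entireCalculus hd B).tsum_eq]
  refine (tsum_of_norm_bounded (hgeom.mul_left _) hterm).trans_eq ?_
  ring

end EntireCalculus

section CStarCalculus

variable {𝔸 : Type*} [CStarAlgebra 𝔸] {ι : Type*}

theorem hasSum_cfc {g : ι → ℂ → ℂ} {u : ι → ℝ} (hu : Summable u) {B : 𝔸}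
    (hcont : ∀ i, ContinuousOn (g i) (spectrum ℂ B))
    (hle : ∀ i, ∀ z ∈ spectrum ℂ B, ‖g i z‖ ≤ u i) :
    HasSum (fun i => cfc (g i) B) (cfc (fun z => ∑' i, g i z) B) := by
  have hunif := tendstoUniformlyOn_tsum hu hle
  refine (tendsto_cfc_fun hunif (Eventually.of_forall fun s =>
    continuousOn_finsetSum s fun i _ => hcont i)).congr fun s => ?_
  rw [← cfc_sum g B s fun i _ => hcont i, ← Finset.sum_fn]

theorem entireCalculus_eq_cfc [Nontrivial 𝔸] {g : ℂ → ℂ} (hd : Differentiable ℂ g) {B : 𝔸}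
    (hB : IsStarNormal B) : entireCalculus 𝔸 g B = cfc g B := by
  have hsum := hasSum_cfc (summable_norm_taylorCoeff_mul_pow hd (norm_nonneg B)) (B := B)
    (g := fun k z => taylorCoeff g k * z ^ k) (fun k => by fun_prop) fun k z hz => by
      rw [norm_mul, norm_pow]
      gcongr
      exact spectrum.norm_le_norm_of_mem hz
  simp_rw [fun z => (hasSum_taylorCoeff_mul_pow hd z).tsum_eq] at hsum
  refine (hasSum_entireCalculus hd B).unique (hsum.congr_fun fun k => ?_)
  rw [cfc_const_mul _ _ B (by fun_prop), cfc_pow_id (R := ℂ) B k]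

theorem norm_entireCalculus_le [Nontrivial 𝔸] {g : ℂ → ℂ} (hd : Differentiable ℂ g) {M : ℝ}
    (hM : ∀ x : ℝ, ‖g x‖ ≤ M) {B : 𝔸} (hB : IsSelfAdjoint B) : ‖entireCalculus 𝔸 g B‖ ≤ M := by
  rw [entireCalculus_eq_cfc hd hB.isStarNormal]
  refine norm_cfc_le ((norm_nonneg _).trans (hM 0)) fun z hz => ?_
  rw [hB.mem_spectrum_eq_re hz]
  exact hM z.re

theorem cfc_eq_cfc_of_ofReal_eq {f : ℝ → ℝ} {g : ℂ → ℂ} (hfg : ∀ x : ℝ, (f x : ℂ) = g x) {B : 𝔸}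
    (hB : IsSelfAdjoint B) : cfc f B = cfc g B := by
  rw [cfc_real_eq_complex f hB]
  refine cfc_congr fun z hz => ?_
  rw [hfg, ← hB.mem_spectrum_eq_re hz]

section Series

variable [Nontrivial 𝔸] {f : ℝ → ℝ} {g : ι → ℂ → ℂ} {a σ : ι → ℝ}
  (hd : ∀ i, Differentiable ℂ (g i)) (ha : ∀ i, ∀ x : ℝ, ‖g i x‖ ≤ a i)
  (hf : ∀ x : ℝ, (f x : ℂ) = ∑' i, g i x) (hsum : Summable a)

include hd ha hf hsum

theorem hasSum_entireCalculus_cfc {B : 𝔸} (hB : IsSelfAdjoint B) :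
    HasSum (fun i => entireCalculus 𝔸 (g i) B) (cfc f B) := by
  simp_rw [entireCalculus_eq_cfc (hd _) hB.isStarNormal,
    cfc_eq_cfc_of_ofReal_eq (g := fun z => ∑' i, g i z) hf hB]
  refine hasSum_cfc hsum (fun i => (hd i).continuous.continuousOn) fun i z hz => ?_
  rw [hB.mem_spectrum_eq_re hz]
  exact ha i z.re

variable (hσ : ∀ i, 0 ≤ σ i) (hg : ∀ i, IsOfExpType (σ i) (g i))
  (hσsum : Summable fun i => σ i * a i) {A V : 𝔸} (hA : IsSelfAdjoint A) (hV : IsSelfAdjoint V)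
  {D : 𝔸} (hD : HasDerivAt (fun t : ℝ => cfc f (A + t • V)) D 0)

include hσ hg hσsum hA hV hD

theorem hasSum_fderiv_entireCalculus :
    HasSum (fun i => fderiv ℂ (entireCalculus 𝔸 (g i)) A V) D := by
  have hline (t : ℝ) : IsSelfAdjoint (A + t • V) := hA.add ((IsSelfAdjoint.all t).smul hV)
  have hdiff (i : ι) : Differentiable ℂ (entireCalculus 𝔸 (g i)) :=
    (contDiff_entireCalculus (hd i)).differentiable one_ne_zero
  have hfderiv (i : ι) (B : 𝔸) (hB : IsSelfAdjoint B) :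
      ‖fderiv ℂ (entireCalculus 𝔸 (g i)) B V‖ ≤ σ i * a i * ‖V‖ :=
    norm_fderiv_apply_le (S := selfAdjoint.submodule ℝ 𝔸) (hσ i)
      ((hg i).entireCalculus (hd i) (hσ i))
      (fun X hX => norm_entireCalculus_le (hd i) (ha i) hX) (hdiff i) hB hV
  have hderiv := hasDerivAt_tsum (hσsum.mul_right ‖V‖)
    (fun i t => hasDerivAt_comp_real_line (hdiff i) A V t) (fun i t => hfderiv i _ (hline t))
    (hasSum_entireCalculus_cfc hd ha hf hsum (hline 0)).summable 0
  simp_rw [fun t => (hasSum_entireCalculus_cfc hd ha hf hsum (hline t)).tsum_eq, zero_smul,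
    add_zero] at hderiv
  rw [← hderiv.unique hD]
  exact (Summable.of_norm_bounded (hσsum.mul_right ‖V‖) fun i => hfderiv i A hA).hasSum

theorem hasSum_taylorRemainder_entireCalculus :
    HasSum (fun i => taylorRemainder (entireCalculus 𝔸 (g i)) A V)
      (cfc f (A + V) - cfc f A - D) :=
  ((hasSum_entireCalculus_cfc hd ha hf hsum (hA.add hV)).sub
    (hasSum_entireCalculus_cfc hd ha hf hsum hA)).sub
      (hasSum_fderiv_entireCalculus hd ha hf hsum hσ hg hσsum hA hV hD)

end Series

end CStarCalculus

section Besov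

theorem summable_two_rpow_mul_of_le {a : ℕ → ℝ} (ha : ∀ n, 0 ≤ a n) {r s : ℝ} (hrs : r ≤ s)
    (hs : Summable fun n : ℕ => (2 : ℝ) ^ ((n : ℝ) * s) * a n) :
    Summable fun n : ℕ => (2 : ℝ) ^ ((n : ℝ) * r) * a n := by
  refine hs.of_nonneg_of_le (fun n => mul_nonneg (by positivity) (ha n)) fun n => ?_
  gcongr
  · exact ha n
  · exact one_le_two

theorem two_mul_two_pow_succ_mul_rpow (n : ℕ) (s : ℝ) {δ : ℝ} (hδ : 0 ≤ δ) :
    2 * (2 : ℝ) ^ (n + 1) * ((2 : ℝ) ^ (n + 1) / 2 * δ) ^ (s - 1) =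
      4 * (2 : ℝ) ^ ((n : ℝ) * s) * δ ^ (s - 1) := by
  have hpow : (2 : ℝ) ^ ((n : ℝ) * s) = 2 ^ n * ((2 : ℝ) ^ n) ^ (s - 1) := by
    rw [Real.rpow_mul zero_le_two, Real.rpow_natCast, Real.rpow_sub_one (by positivity),
      mul_div_cancel₀ _ (by positivity)]
  rw [hpow, pow_succ, mul_div_cancel_right₀ _ two_ne_zero, Real.mul_rpow (by positivity) hδ]
  ring

theorem four_mul_half_rpow_mul_self {s x : ℝ} (hs : s ≠ 0) (hx : 0 ≤ x) :
    4 * (x / 2) ^ (s - 1) * x = 2 ^ (3 - s) * x ^ s := by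
  rcases hx.eq_or_lt with rfl | hx
  · simp [Real.zero_rpow hs]
  · have h2 : (2 : ℝ) ^ (3 - s) = 4 / 2 ^ (s - 1) := by
      rw [show 3 - s = 2 - (s - 1) by ring, Real.rpow_sub two_pos, Real.rpow_two]
      norm_num
    rw [h2, Real.div_rpow hx.le zero_le_two, ← div_mul_cancel₀ (x ^ s) hx.ne',
      ← Real.rpow_sub_one hx.ne']
    ring

variable {𝔸 : Type*} [CStarAlgebra 𝔸] {s : ℝ} {f : ℝ → ℝ} {fn : ℕ → ℂ → ℂ} {a : ℕ → ℝ}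
  {A V V' D D' : 𝔸}

theorem norm_cfc_taylorRemainder_sub_le (hs1 : 1 ≤ s) (hs2 : s ≤ 2)
    (hentire : ∀ n, Differentiable ℂ (fn n)) (htype : ∀ n, IsOfExpType (2 ^ (n + 1)) (fn n))
    (hbound : ∀ n, ∀ x : ℝ, ‖fn n x‖ ≤ a n) (hdecomp : ∀ x : ℝ, (f x : ℂ) = ∑' n, fn n x)
    (hbesov : Summable fun n : ℕ => (2 : ℝ) ^ ((n : ℝ) * s) * a n)
    (hA : IsSelfAdjoint A) (hV : IsSelfAdjoint V) (hV' : IsSelfAdjoint V')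
    (hD : HasDerivAt (fun t : ℝ => cfc f (A + t • V)) D 0)
    (hD' : HasDerivAt (fun t : ℝ => cfc f (A + t • V')) D' 0) :
    ‖(cfc f (A + V') - cfc f A - D') - (cfc f (A + V) - cfc f A - D)‖
      ≤ 4 * (∑' n : ℕ, (2 : ℝ) ^ ((n : ℝ) * s) * a n)
          * (min ‖V‖ ‖V'‖ + ‖V' - V‖ / 2) ^ (s - 1) * ‖V' - V‖ := by
  rcases subsingleton_or_nontrivial 𝔸 with _ | _
  · simp [Subsingleton.elim _ (0 : 𝔸)]
  have ha (n : ℕ) : 0 ≤ a n := (norm_nonneg _).trans (hbound n 0)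
  have hσ (n : ℕ) : (0 : ℝ) ≤ 2 ^ (n + 1) := by positivity
  have hsum : Summable a := by
    simpa using summable_two_rpow_mul_of_le ha (zero_le_one.trans hs1) hbesov
  have hσsum : Summable fun n => (2 : ℝ) ^ (n + 1) * a n := by
    simpa [pow_succ', mul_assoc] using (summable_two_rpow_mul_of_le ha hs1 hbesov).mul_left 2
  rw [← ((hasSum_taylorRemainder_entireCalculus hentire hbound hdecomp hsum hσ htype hσsum hA hV'
    hD').sub (hasSum_taylorRemainder_entireCalculus hentire hbound hdecomp hsum hσ htype hσsum hA hV
    hD)).tsum_eq]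
  refine tsum_of_norm_bounded (((hbesov.hasSum.mul_left 4).mul_right _).mul_right _) fun n => ?_
  have hpiece := norm_taylorRemainder_sub_le_rpow (S := selfAdjoint.submodule ℝ 𝔸) (hσ n)
    ((htype n).entireCalculus (hentire n) (hσ n))
    (fun B hB => norm_entireCalculus_le (hentire n) (hbound n) hB) hA hV hV'
    (contDiff_entireCalculus (hentire n)) (sub_nonneg.2 hs1) (by linarith : s - 1 ≤ 1)
  refine hpiece.trans_eq ?_
  rw [mul_right_comm _ (a n), two_mul_two_pow_succ_mul_rpow n s (by positivity)]
  ring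

end Besov

theorem stmt18_general {𝔸 : Type*} [CStarAlgebra 𝔸] {s : ℝ} (hs1 : 1 ≤ s) (hs2 : s ≤ 2)
    {f : ℝ → ℝ} {fn : ℕ → ℂ → ℂ} {a : ℕ → ℝ}
    (hentire : ∀ n, Differentiable ℂ (fn n)) (htype : ∀ n, IsOfExpType (2 ^ (n + 1)) (fn n))
    (hbound : ∀ n, ∀ x : ℝ, ‖fn n x‖ ≤ a n) (hdecomp : ∀ x : ℝ, (f x : ℂ) = ∑' n, fn n x)
    (hbesov : Summable fun n : ℕ => (2 : ℝ) ^ ((n : ℝ) * s) * a n)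
    {A : 𝔸} (hA : IsSelfAdjoint A) {D : 𝔸 → 𝔸}
    (hD : ∀ V, IsSelfAdjoint V → HasDerivAt (fun t : ℝ => cfc f (A + t • V)) (D V) 0)
    {V V' : 𝔸} (hV : IsSelfAdjoint V) (hV' : IsSelfAdjoint V') :
    ‖(cfc f (A + V') - cfc f A - D V') - (cfc f (A + V) - cfc f A - D V)‖
        ≤ 4 * (∑' n : ℕ, (2 : ℝ) ^ ((n : ℝ) * s) * a n)
            * (min ‖V‖ ‖V'‖ + ‖V' - V‖ / 2) ^ (s - 1) * ‖V' - V‖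
    ∧ ‖cfc f (A + V') - cfc f A - D V'‖
        ≤ 2 ^ (3 - s) * (∑' n : ℕ, (2 : ℝ) ^ ((n : ℝ) * s) * a n) * ‖V'‖ ^ s := by
  refine ⟨norm_cfc_taylorRemainder_sub_le hs1 hs2 hentire htype hbound hdecomp hbesov hA hV hV'
    (hD V hV) (hD V' hV'), ?_⟩
  have hD0 : HasDerivAt (fun t : ℝ => cfc f (A + t • (0 : 𝔸))) 0 0 := by
    simpa using hasDerivAt_const (0 : ℝ) (cfc f A)
  have h := norm_cfc_taylorRemainder_sub_le hs1 hs2 hentire htype hbound hdecomp hbesov hA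
    (.zero 𝔸) hV' hD0 (hD V' hV')
  simp only [add_zero, sub_self, sub_zero, norm_zero, min_eq_left (norm_nonneg _), zero_add] at h
  refine h.trans_eq ?_
  rw [mul_right_comm 4, mul_right_comm _ _ ‖V'‖,
    four_mul_half_rpow_mul_self (zero_lt_one.trans_le hs1).ne' (norm_nonneg V')]
  ring

/-- Suppose `f ∈ B^s_{∞,1}(ℝ)` for some `s ∈ (1,2]`, given through its
Littlewood–Paley decomposition `f = ∑_{n≥0} f_n` (each `f_n` a bounded entire function of
exponential type `2^{n+1}` with `‖f_n‖_{L∞(ℝ)} ≤ a n`, and Besov norm `∑ 2^{ns} a n < ∞`).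
Let `D` be the derivative of the operator function `A ↦ f(A)` at a bounded self-adjoint
`A` (so that `S_f(A;V) := f(A+V) − f(A) − D(V)` is the first-order Taylor remainder).
Then for all bounded self-adjoint `V, V'`:
`‖S_f(A;V') − S_f(A;V)‖ ≤ 4·‖f‖_{B^s}·δ(V,V')^{s−1}·‖V'−V‖` with
`δ(V,V') = min(‖V‖,‖V'‖) + ‖V'−V‖/2`, and in particular (taking `V = 0`)
`‖S_f(A;V')‖ ≤ 2^{3−s}·‖f‖_{B^s}·‖V'‖^s`. -/
theorem stmt18 {H : Type*} [NormedAddCommGroup H] [InnerProductSpace ℂ H] [CompleteSpace H]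
    (s : ℝ) (hs1 : 1 < s) (hs2 : s ≤ 2)
    (f : ℝ → ℝ) (hf : Continuous f)
    (fn : ℕ → ℂ → ℂ) (a : ℕ → ℝ)
    (hentire : ∀ n, Differentiable ℂ (fn n))
    (htype : ∀ n, ∀ ε > (0 : ℝ), ∃ C > (0 : ℝ), ∀ z : ℂ,
      ‖fn n z‖ ≤ C * Real.exp (((2 : ℝ) ^ (n + 1) + ε) * ‖z‖))
    (hbound : ∀ n, ∀ x : ℝ, ‖fn n x‖ ≤ a n)
    (hdecomp : ∀ x : ℝ, (f x : ℂ) = ∑' n, fn n x)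
    (hbesov : Summable fun n : ℕ => (2 : ℝ) ^ ((n : ℝ) * s) * a n)
    (A : H →L[ℂ] H) (hA : IsSelfAdjoint A)
    (D : (H →L[ℂ] H) → (H →L[ℂ] H))
    (hD : ∀ V : H →L[ℂ] H, IsSelfAdjoint V →
      HasDerivAt (fun t : ℝ => cfc f (A + t • V)) (D V) 0) :
    ∀ V V' : H →L[ℂ] H, IsSelfAdjoint V → IsSelfAdjoint V' →
      ‖(cfc f (A + V') - cfc f A - D V') - (cfc f (A + V) - cfc f A - D V)‖
          ≤ 4 * (∑' n : ℕ, (2 : ℝ) ^ ((n : ℝ) * s) * a n)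
              * (min ‖V‖ ‖V'‖ + ‖V' - V‖ / 2) ^ (s - 1) * ‖V' - V‖
      ∧ ‖cfc f (A + V') - cfc f A - D V'‖
          ≤ 2 ^ (3 - s) * (∑' n : ℕ, (2 : ℝ) ^ ((n : ℝ) * s) * a n) * ‖V'‖ ^ s := by
  intro V V' hV hV'
  exact stmt18_general hs1.le hs2 hentire (fun n => .of_forall_pos_add (htype n)) hbound hdecomp
    hbesov hA hD hV hV'
end
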